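/- Let P = x^32 - 4x^31 - 155x^28 + 713x^27 - 2480x^26 + 9300x^25 - 5921x^24 + 24707x^23 + 127410x^22 - 646195x^21 + 747906x^20 - 7527575x^19 + 4369791x^18 - 28954961x^17 - 40645681x^16 + 66421685x^15 - 448568729x^14 + 751001257x^13 - 1820871490x^12 + 2531110165x^11 - 4120267319x^10 + 4554764528x^9 - 5462615927x^8 + 4607500922x^7 - 4062352344x^6 + 2380573824x^5 - 1492309000x^4 + 521018178x^3 - 201167463x^2 + 20505628x - 1261963 ∈ ℚ[x]. The Galois group of P over ℚ (i.e., the Galois group of its splitting field over ℚ) is isomorphic to PGL₂(F₃₁). -/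

import Mathlib

open Polynomial Matrix

noncomputable def P : Polynomial ℚ :=
  X^32 - 4*X^31 - 155*X^28 + 713*X^27 - 2480*X^26 + 9300*X^25 - 5921*X^24 + 24707*X^23 + 127410*X^22 - 646195*X^21 + 747906*X^20 - 7527575*X^19 + 4369791*X^18 - 28954961*X^17 - 40645681*X^16 + 66421685*X^15 - 448568729*X^14 + 751001257*X^13 - 1820871490*X^12 + 2531110165*X^11 - 4120267319*X^10 + 4554764528*X^9 - 5462615927*X^8 + 4607500922*X^7 - 4062352344*X^6 + 2380573824*X^5 - 1492309000*X^4 + 521018178*X^3 - 201167463*X^2 + 20505628*X - 1261963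

/-!
Modulo the prime `735389` the polynomial `P` splits into distinct linear factors, and its roots
can be labelled by the projective line over `F₃₁` so that the orbit of a suitable `12`-point block
under `PGL₂(F₃₁)` becomes visible in characteristic zero: the monic polynomial whose roots are the
sums of the roots of `P` over the `496` blocks, and two polynomials expressing whether a point
lies on a block, lift from `735389`-adic precision to integral polynomials with small
coefficients. The relation between these polynomials holds modulo a power of `735389`; its
coefficients are so small that it holds exactly, hence the Galois group preserves the incidence
structure of the blocks.

The automorphism group of the blocks is `PGL₂(F₃₁)`, because colour refinement shows that an
automorphism fixing three points is trivial. Frobenius elements at `3`, `193`, `139`, `113` and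
`103` give a Galois element without fixed points and elements with a fixed point whose orders are
divisible by `31`, `2`, `3` and `5`, and this forces the order of the Galois group up to
`|PGL₂(F₃₁)| = 29760`.
-/

section PermutationGroups

variable {Ω : Type*}

/-- A permutation group is three-rigid if only the identity fixes three distinct points. This is
the uniqueness half of sharp `3`-transitivity. -/
def ThreeRigid (A : Subgroup (Equiv.Perm Ω)) : Prop :=
  ∀ g ∈ A, ∀ e : Fin 3 ↪ Ω, (∀ i, g (e i) = e i) → g = 1

namespace ThreeRigid

variable {A : Subgroup (Equiv.Perm Ω)} {g : Equiv.Perm Ω} {x y z : Ω}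

theorem eq_one (hA : ThreeRigid A) (hg : g ∈ A) (hxy : x ≠ y) (hxz : x ≠ z) (hyz : y ≠ z)
    (hx : g x = x) (hy : g y = y) (hz : g z = z) : g = 1 := by
  refine hA g hg ⟨![x, y, z], ?_⟩ ?_
  · simp [Function.Injective, Fin.forall_fin_succ, hxy, hxz, hyz, hxy.symm, hxz.symm, hyz.symm]
  · simp only [Fin.forall_fin_succ, IsEmpty.forall_iff, and_true]
    exact ⟨hx, hy, hz⟩

theorem natCard_le [Fintype Ω] (hA : ThreeRigid A) (hΩ : 3 ≤ Fintype.card Ω) :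
    Nat.card A ≤ (Fintype.card Ω).descFactorial 3 := by
  classical
  obtain ⟨e⟩ : Nonempty (Fin 3 ↪ Ω) := Function.Embedding.nonempty_of_card_le (by simpa using hΩ)
  have hinj : Function.Injective fun g : A => e.trans g.1.toEmbedding := fun g h hgh => by
    have hfix : (h⁻¹ * g : A) = 1 := Subtype.ext <| hA _ (h⁻¹ * g).2 e fun i => by
      simpa [Equiv.symm_apply_eq] using! DFunLike.congr_fun hgh i
    exact (inv_mul_eq_one.1 hfix).symm
  simpa [Fintype.card_embedding_eq] using Nat.card_le_card_of_injective _ hinj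

/-- If `g ^ k` fixes `y`, it fixes the three points `x`, `y` and `g y`. -/
theorem pow_eq_one (hA : ThreeRigid A) (hg : g ∈ A) (hx : g x = x) (hy : g y ≠ y) {k : ℕ}
    (hk : (g ^ k) y = y) : g ^ k = 1 := by
  have hxy : x ≠ y := fun h => hy (h ▸ hx)
  have hxgy : x ≠ g y := fun h => hxy (g.injective (hx.trans h))
  refine hA.eq_one (pow_mem hg k) hxy hxgy hy.symm ?_ hk ?_
  · exact Function.IsFixedPt.perm_pow hx k
  · rw [← Equiv.Perm.mul_apply, ← pow_succ, pow_succ', Equiv.Perm.mul_apply, hk]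

variable {S : Finset Ω}

theorem orderOf_dvd_card [Finite Ω] (hA : ThreeRigid A) (hg : g ∈ A) (hx : g x = x)
    (hS : ∀ y, g y ∈ S ↔ y ∈ S) (hmove : ∀ y ∈ S, g y ≠ y) :
    orderOf g ∣ S.card := by
  classical
  have := Fintype.ofFinite Ω
  let h : Equiv.Perm S := g.subtypePerm (p := (· ∈ S)) hS
  have hsupp : h.support = Finset.univ := Finset.eq_univ_of_forall fun y =>
    Equiv.Perm.mem_support.2 fun hy => hmove y y.2 (congrArg Subtype.val hy)
  have hsum : h.cycleType.sum = S.card := by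
    rw [Equiv.Perm.sum_cycleType, hsupp, Finset.card_univ, Fintype.card_coe]
  rw [← hsum]
  refine Multiset.dvd_sum fun n hn => ?_
  obtain ⟨c, hc, rfl⟩ := Multiset.mem_map.1 (Equiv.Perm.cycleType_def h ▸ hn)
  obtain ⟨y, hy⟩ := (Equiv.Perm.mem_cycleFactorsFinset_iff.1 hc).1.nonempty_support
  have hfix : (h ^ c.support.card) y = y := by
    rw [Equiv.Perm.cycle_is_cycleOf hy hc]
    simpa using (h.pow_mod_card_support_cycleOf_self_apply (h.cycleOf y).support.card y).symm
  refine orderOf_dvd_of_pow_eq_one (hA.pow_eq_one hg hx (hmove y y.2) ?_)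
  rw [Equiv.Perm.subtypePerm_pow] at hfix
  exact congrArg Subtype.val hfix

theorem orderOf_eq_card [Finite Ω] (hA : ThreeRigid A) (hg : g ∈ A) (hx : g x = x)
    (hS : ∀ y, g y ∈ S ↔ y ∈ S) (hmove : ∀ y ∈ S, g y ≠ y)
    (hprime : S.card.Prime) : orderOf g = S.card := by
  obtain ⟨y, hy⟩ := Finset.card_pos.1 hprime.pos
  refine (hprime.eq_one_or_self_of_dvd _ (hA.orderOf_dvd_card hg hx hS hmove)).resolve_left ?_
  rw [orderOf_eq_one_iff]
  rintro rfl
  exact hmove y hy rfl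

end ThreeRigid

/-- The permutation `g` fixes a point and restricts to a fixed-point-free permutation of some set
of `d` points. -/
def FixesAndMoves (g : Equiv.Perm Ω) (d : ℕ) : Prop :=
  ∃ x, g x = x ∧ ∃ S : Finset Ω, S.card = d ∧ (∀ y, g y ∈ S ↔ y ∈ S) ∧ ∀ y ∈ S, g y ≠ y

variable {A H : Subgroup (Equiv.Perm Ω)}

theorem ThreeRigid.orderOf_eq_of_fixesAndMoves [Finite Ω] (hA : ThreeRigid A)
    {g : Equiv.Perm Ω} (hg : g ∈ A) {d : ℕ} (hd : d.Prime) (hgd : FixesAndMoves g d) :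
    orderOf g = d := by
  obtain ⟨x, hx, S, rfl, hS, hmove⟩ := hgd
  exact hA.orderOf_eq_card hg hx hS hmove hd

theorem isPretransitive_of_isCycle {g g₀ : Equiv.Perm Ω} (hg : g ∈ H)
    (hg₀ : g₀ ∈ H) (hcycle : g.IsCycle) {x : Ω} (hx : ∀ y, y ≠ x → g y ≠ y) (hx₀ : g₀ x ≠ x) :
    MulAction.IsPretransitive H Ω := by
  rw [MulAction.isPretransitive_iff_base x]
  intro y
  obtain rfl | hy := eq_or_ne y x
  · exact ⟨1, one_smul _ _⟩
  · obtain ⟨k, hk⟩ := hcycle.sameCycle (hx _ hx₀) (hx y hy)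
    exact ⟨⟨g ^ k * g₀, mul_mem (zpow_mem hg k) hg₀⟩, hk⟩

theorem FixesAndMoves.isPretransitive [Fintype Ω] {g g₀ : Equiv.Perm Ω} {d : ℕ}
    (hgd : FixesAndMoves g d) (hd : d + 1 = Fintype.card Ω) (hord : orderOf g = d)
    (hprime : d.Prime) (hg : g ∈ H) (hg₀ : g₀ ∈ H) (hmove₀ : ∀ x, g₀ x ≠ x) :
    MulAction.IsPretransitive H Ω := by
  classical
  obtain ⟨x, hx, S, hcard, -, hmove⟩ := hgd
  have hxS : x ∉ S := fun hxS => hmove x hxS hx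
  have hSuniv : insert x S = Finset.univ := by
    rw [← Finset.card_eq_iff_eq_univ, Finset.card_insert_of_notMem hxS, hcard, hd]
  have hcycle : g.IsCycle := Equiv.Perm.isCycle_of_prime_order' (hord ▸ hprime) <| by
    have := hprime.two_le
    omega
  refine isPretransitive_of_isCycle hg hg₀ hcycle (fun y hy => hmove y ?_) (hmove₀ x)
  exact Finset.mem_of_mem_insert_of_ne (hSuniv ▸ Finset.mem_univ y) hy

theorem card_mul_orderOf_dvd_natCard [MulAction.IsPretransitive H Ω] {g : Equiv.Perm Ω}
    (hg : g ∈ H) {x : Ω} (hx : g x = x) : Nat.card Ω * orderOf g ∣ Nat.card H := by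
  rw [← (MulAction.stabilizer H x).index_mul_card, MulAction.index_stabilizer_of_transitive]
  refine mul_dvd_mul_left _ ?_
  have hstab : (⟨g, hg⟩ : H) ∈ MulAction.stabilizer H x := hx
  have hdvd := (MulAction.stabilizer H x).orderOf_dvd_natCard hstab
  rwa [Subgroup.orderOf_mk] at hdvd

theorem ThreeRigid.eq_of_le [Fintype Ω] (hA : ThreeRigid A) (hHA : H ≤ A)
    (hΩ : 3 ≤ Fintype.card Ω) (hcard : (Fintype.card Ω).descFactorial 3 ∣ Nat.card H) : H = A := by
  refine Subgroup.eq_of_le_of_card_ge hHA ((hA.natCard_le hΩ).trans ?_)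
  exact Nat.le_of_dvd Nat.card_pos hcard

/-- The group order `32 * 31 * 30` splits into the primes `2`, `3`, `5`, `31`, and each of them is
the order of an element with a fixed point. -/
theorem ThreeRigid.eq_of_fixesAndMoves {A H : Subgroup (Equiv.Perm (Fin 32))} (hA : ThreeRigid A)
    (hHA : H ≤ A) {g₀ : Equiv.Perm (Fin 32)} (hg₀ : g₀ ∈ H) (hmove₀ : ∀ x, g₀ x ≠ x)
    (hH : ∀ d ∈ [31, 2, 3, 5], ∃ g ∈ H, FixesAndMoves g d) : H = A := by
  have hord : ∀ d ∈ [31, 2, 3, 5], ∃ g ∈ H, FixesAndMoves g d ∧ orderOf g = d := fun d hd => by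
    obtain ⟨g, hg, hgd⟩ := hH d hd
    have hprime : ∀ d ∈ [31, 2, 3, 5], d.Prime := by norm_num
    exact ⟨g, hg, hgd, hA.orderOf_eq_of_fixesAndMoves (hHA hg) (hprime d hd) hgd⟩
  obtain ⟨g, hg, hg31, hord31⟩ := hord 31 (by simp)
  have : MulAction.IsPretransitive H (Fin 32) :=
    hg31.isPretransitive (by simp) hord31 (by norm_num) hg hg₀ hmove₀
  have hdvd : ∀ d ∈ [31, 2, 3, 5], 32 * d ∣ Nat.card H := fun d hd => by
    obtain ⟨g, hg, ⟨x, hx, -⟩, hgd⟩ := hord d hd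
    simpa [hgd] using card_mul_orderOf_dvd_natCard hg hx
  refine hA.eq_of_le hHA (by simp) ?_
  rw [show (Fintype.card (Fin 32)).descFactorial 3 =
      [31, 2, 3, 5].foldr (fun d => (32 * d).lcm) 1 by norm_num [Nat.descFactorial]]
  exact Nat.lcm_dvd (hdvd 31 (by simp)) <| Nat.lcm_dvd (hdvd 2 (by simp)) <|
    Nat.lcm_dvd (hdvd 3 (by simp)) <| Nat.lcm_dvd (hdvd 5 (by simp)) (one_dvd _)

end PermutationGroups

section ProjectiveLine

open OnePoint

variable {K : Type*} [Field K]

/-- The matrix acting on the projective line as `x ↦ a * x + b`. -/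
def affineGL (a : Kˣ) (b : K) : GL (Fin 2) K :=
  GeneralLinearGroup.mkOfDetNeZero !![(a : K), b; 0, 1] (by simp)

/-- The matrix acting on the projective line as `x ↦ x⁻¹`. -/
def invGL : GL (Fin 2) K :=
  GeneralLinearGroup.mkOfDetNeZero !![0, 1; 1, 0] (by simp)

theorem affineGL_mul (a a' : Kˣ) (b b' : K) :
    affineGL a b * affineGL a' b' = affineGL (a * a') (a * b' + b) := by
  ext i j
  fin_cases i <;> fin_cases j <;>
    simp [affineGL, GeneralLinearGroup.mkOfDetNeZero, Matrix.mul_apply, Fin.sum_univ_two]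

theorem affineGL_one_zero : (affineGL 1 0 : GL (Fin 2) K) = 1 := by
  ext i j
  fin_cases i <;> fin_cases j <;> simp [affineGL, GeneralLinearGroup.mkOfDetNeZero]

theorem affineGL_one_one_pow (n : ℕ) : (affineGL 1 1 : GL (Fin 2) K) ^ n = affineGL 1 (n : K) := by
  induction n with
  | zero => simp [affineGL_one_zero]
  | succ n ih => rw [pow_succ, ih, affineGL_mul]; simp [add_comm]

theorem affineGL_zero_pow (a : Kˣ) (n : ℕ) : affineGL a 0 ^ n = affineGL (a ^ n) 0 := by
  induction n with
  | zero => simp [affineGL_one_zero]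
  | succ n ih => rw [pow_succ, ih, affineGL_mul, pow_succ]; simp

theorem exists_center_mul_affineGL {g : GL (Fin 2) K} (hg : g 1 0 = 0) :
    ∃ c ∈ Subgroup.center (GL (Fin 2) K), ∃ a b, g = c * affineGL a b := by
  have hdet : g 0 0 * g 1 1 ≠ 0 := by simpa [det_fin_two, hg] using g.det_ne_zero
  have h11 := right_ne_zero_of_mul hdet
  let d : Kˣ := Units.mk0 _ h11
  refine ⟨GeneralLinearGroup.scalar (Fin 2) d, ?_, Units.mk0 _ (left_ne_zero_of_mul hdet) / d,
    g 0 1 / d, ?_⟩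
  · rw [GeneralLinearGroup.center_eq_range_scalar]
    exact ⟨d, rfl⟩
  · ext i j
    fin_cases i <;> fin_cases j <;>
      simp [affineGL, GeneralLinearGroup.mkOfDetNeZero, hg, d, mul_div_cancel₀, h11]

/-- Bruhat decomposition: if `g` moves `∞`, then translating `g • ∞` to `0` and inverting gives a
matrix that fixes `∞`. -/
theorem eq_top_of_affineGL_mem_of_invGL_mem {S : Subgroup (GL (Fin 2) K)}
    (hcenter : Subgroup.center (GL (Fin 2) K) ≤ S) (haff : ∀ a b, affineGL a b ∈ S)
    (hinv : invGL ∈ S) : S = ⊤ := by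
  have htriangular {g : GL (Fin 2) K} (hg : g 1 0 = 0) : g ∈ S := by
    obtain ⟨c, hc, a, b, rfl⟩ := exists_center_mul_affineGL hg
    exact mul_mem (hcenter hc) (haff a b)
  refine (Subgroup.eq_top_iff' S).2 fun g => ?_
  by_cases hg : g 1 0 = 0
  · exact htriangular hg
  · have hmem : invGL * affineGL 1 (-(g 0 0 / g 1 0)) ∈ S := mul_mem hinv (haff _ _)
    refine (S.mul_mem_cancel_left hmem).1 (htriangular ?_)
    simp [affineGL, invGL, GeneralLinearGroup.mkOfDetNeZero, Matrix.mul_apply, Fin.sum_univ_two, hg]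

theorem exists_affineGL_mem {S : Subgroup (GL (Fin 2) K)}
    (hone : affineGL 1 1 ∈ S) {u : Kˣ} (hu : affineGL u 0 ∈ S)
    (hgen : ∀ a : Kˣ, ∃ n : ℕ, u ^ n = a) (hnat : ∀ b : K, ∃ n : ℕ, (n : K) = b) (a : Kˣ) (b : K) :
    affineGL a b ∈ S := by
  obtain ⟨m, rfl⟩ := hgen a
  obtain ⟨n, rfl⟩ := hnat b
  have hfactor : affineGL (u ^ m) (n : K) = affineGL 1 1 ^ n * affineGL u 0 ^ m := by
    rw [affineGL_one_one_pow, affineGL_zero_pow, affineGL_mul]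
    simp
  exact hfactor ▸ mul_mem (pow_mem hone n) (pow_mem hu m)

variable (K) in
/-- The base points `0, 1, ∞` of the projective line. -/
def zeroOneInfty : Fin 3 ↪ OnePoint K :=
  ⟨![((0 : K) : OnePoint K), ((1 : K) : OnePoint K), ∞],
    by simp [Function.Injective, Fin.forall_fin_succ]⟩

theorem zeroOneInfty_zero : zeroOneInfty K 0 = ((0 : K) : OnePoint K) := rfl

theorem zeroOneInfty_one : zeroOneInfty K 1 = ((1 : K) : OnePoint K) := rfl

theorem zeroOneInfty_two : zeroOneInfty K 2 = ∞ := rfl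

variable [DecidableEq K]

theorem ker_toPermHom_onePoint :
    (MulAction.toPermHom (GL (Fin 2) K) (OnePoint K)).ker = Subgroup.center (GL (Fin 2) K) := by
  ext g
  rw [MonoidHom.mem_ker, GeneralLinearGroup.mem_center_iff_val_mem_range_scalar]
  constructor
  · intro hg
    have hfix (x : OnePoint K) : g • x = x := DFunLike.congr_fun hg x
    have h10 : g 1 0 = 0 := smul_infty_eq_self_iff.1 (hfix ∞)
    have h11 : g 1 1 ≠ 0 := fun h => g.det_ne_zero (by rw [det_fin_two, h10, h]; ring)
    have hline (x : K) : g 0 0 * x + g 0 1 = x * g 1 1 := by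
      have hx := hfix x
      rwa [smul_some_eq_ite, h10, zero_mul, zero_add, if_neg h11, OnePoint.coe_eq_coe,
        div_eq_iff h11] at hx
    have h01 : g 0 1 = 0 := by simpa using hline 0
    have h00 : g 0 0 = g 1 1 := by simpa [h01] using hline 1
    exact ⟨g 1 1, by ext i j; fin_cases i <;> fin_cases j <;> simp [h10, h01, h00]⟩
  · rintro ⟨a, ha⟩
    have ha0 : a ≠ 0 := fun h => g.det_ne_zero (by simp [← ha, h])
    refine Equiv.ext fun x => ?_
    induction x using OnePoint.rec <;>
      simp [smul_infty_eq_ite, smul_some_eq_ite, ← ha, ha0]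

theorem affineGL_smul_coe (a : Kˣ) (b x : K) :
    affineGL a b • (x : OnePoint K) = ((a * x + b : K) : OnePoint K) := by
  simp [smul_some_eq_ite, affineGL, GeneralLinearGroup.mkOfDetNeZero]

theorem affineGL_smul_infty (a : Kˣ) (b : K) : affineGL a b • (∞ : OnePoint K) = ∞ := by
  simp [smul_infty_eq_ite, affineGL, GeneralLinearGroup.mkOfDetNeZero]

theorem invGL_smul_coe (x : K) :
    (invGL : GL (Fin 2) K) • (x : OnePoint K) = if x = 0 then ∞ else ((x⁻¹ : K) : OnePoint K) := by
  simp [smul_some_eq_ite, invGL, GeneralLinearGroup.mkOfDetNeZero]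

theorem invGL_smul_infty : (invGL : GL (Fin 2) K) • (∞ : OnePoint K) = ((0 : K) : OnePoint K) := by
  simp [smul_infty_eq_ite, invGL, GeneralLinearGroup.mkOfDetNeZero]

theorem exists_smul_eq_infty (x : OnePoint K) : ∃ g : GL (Fin 2) K, g • x = ∞ := by
  induction x using OnePoint.rec with
  | infty => exact ⟨1, one_smul _ _⟩
  | coe t =>
    exact ⟨invGL * affineGL 1 (-t), by simp [mul_smul, affineGL_smul_coe, invGL_smul_coe]⟩

instance isMultiplyPretransitive_onePoint :
    MulAction.IsMultiplyPretransitive (GL (Fin 2) K) (OnePoint K) 3 := by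
  refine (MulAction.isPretransitive_iff_base (zeroOneInfty K)).2 fun e => ?_
  obtain ⟨h, hh⟩ := exists_smul_eq_infty (K := K) (e 2)
  have hne (i : Fin 3) (hi : i ≠ 2) : h • e i ≠ ∞ := fun hi' =>
    hi (e.injective (smul_left_cancel h (hi'.trans hh.symm)))
  obtain ⟨x, hx⟩ := OnePoint.ne_infty_iff_exists.1 (hne 0 (by decide))
  obtain ⟨y, hy⟩ := OnePoint.ne_infty_iff_exists.1 (hne 1 (by decide))
  have hxy : y - x ≠ 0 := sub_ne_zero.2 fun hyx => by
    have := e.injective (smul_left_cancel h (hx.symm.trans (congrArg _ hyx.symm |>.trans hy)))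
    exact absurd this (by decide)
  have haff : affineGL (Units.mk0 _ hxy) x • zeroOneInfty K = h • e := by
    ext i
    fin_cases i <;>
      simp [zeroOneInfty_zero, zeroOneInfty_one, zeroOneInfty_two, affineGL_smul_coe,
        affineGL_smul_infty, ← hx, ← hy, hh]
  exact ⟨h⁻¹ * affineGL (Units.mk0 _ hxy) x, by rw [mul_smul, haff, inv_smul_smul]⟩

end ProjectiveLine

section KernelEvaluation

variable {α β : Type}

/-- `force n k` equals `k n`; matching on `n` makes the kernel evaluate it to a numeral first. -/
def force (n : ℕ) (k : ℕ → α) : α :=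
  match n with
  | 0 => k 0
  | m + 1 => k (m + 1)

theorem force_eq (n : ℕ) (k : ℕ → α) : force n k = k n := by cases n <;> rfl

/-- `forceMap f l k` equals `k (l.map f)`, with all entries evaluated before `k` is entered. -/
def forceMap (f : β → ℕ) : List β → (List ℕ → α) → α
  | [], k => k []
  | x :: l, k => force (f x) fun y => forceMap f l fun ys => k (y :: ys)

theorem forceMap_eq (f : β → ℕ) (l : List β) (k : List ℕ → α) : forceMap f l k = k (l.map f) := by
  induction l generalizing k with
  | nil => rfl
  | cons x l ih => simp only [forceMap, force_eq, ih, List.map_cons]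

/-- `forceFilter f l k` equals `k (l.filter f)`, with the filtered list evaluated before `k` is
entered. -/
def forceFilter (f : ℕ → Bool) : List ℕ → (List ℕ → α) → α
  | [], k => k []
  | x :: l, k => forceFilter f l fun l' => bif f x then k (x :: l') else k l'

theorem forceFilter_eq (f : ℕ → Bool) (l : List ℕ) (k : List ℕ → α) :
    forceFilter f l k = k (l.filter f) := by
  induction l generalizing k with
  | nil => rfl
  | cons x l ih => cases h : f x <;> simp [forceFilter, ih, h]

/-- Radix sort by the `d` lowest binary digits. -/
def radixSort : ℕ → List ℕ → List ℕ
  | _, [] => []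
  | _, [a] => [a]
  | 0, l => l
  | d + 1, l => forceFilter (fun n => !n.testBit d) l fun l₀ =>
      forceFilter (fun n => n.testBit d) l fun l₁ => radixSort d l₀ ++ radixSort d l₁

theorem radixSort_perm (d : ℕ) (l : List ℕ) : (radixSort d l).Perm l := by
  fun_induction radixSort d l with
  | case1 | case2 | case3 => exact .refl _
  | case4 d l _ _ ih =>
    rw [forceFilter_eq, forceFilter_eq]
    exact ((ih _).append (ih _)).trans
      (List.perm_append_comm.trans (List.filter_append_perm (fun n : ℕ => n.testBit d) l))

theorem nodup_of_isChain_radixSort {d : ℕ} {l : List ℕ} (h : (radixSort d l).IsChain (· < ·)) :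
    l.Nodup :=
  (radixSort_perm d l).nodup_iff.1 (List.isChain_iff_pairwise.1 h).nodup

end KernelEvaluation

section BlockDesigns

open scoped Pointwise

variable {Ω : Type*} [DecidableEq Ω] {𝓑 : Finset (Finset Ω)} {w : Ω → ℕ} {g : Equiv.Perm Ω}

/-- One round of colour refinement for the incidence structure `𝓑`: a point is recoloured by the
colours of the blocks through it. The cube is there because the sum of the block weights
themselves would depend linearly on `w`. -/
def refineWeight (𝓑 : Finset (Finset Ω)) (w : Ω → ℕ) (x : Ω) : ℕ :=
  ∑ B ∈ 𝓑 with x ∈ B, (∑ y ∈ B, w y) ^ 3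

theorem refineWeight_smul (hg : g ∈ MulAction.stabilizer (Equiv.Perm Ω) 𝓑)
    (hw : ∀ x, w (g • x) = w x) (x : Ω) : refineWeight 𝓑 w (g • x) = refineWeight 𝓑 w x := by
  symm
  refine Finset.sum_equiv (MulAction.toPerm g) (fun B => ?_) fun B _ => ?_
  · rw [Finset.mem_filter, Finset.mem_filter, MulAction.toPerm_apply,
      MulAction.mem_stabilizer_finset.1 hg, Finset.smul_mem_smul_finset_iff]
  · have hsum : ∑ y ∈ g • B, w y = ∑ y ∈ B, w (g • y) :=
      Finset.sum_image (MulAction.injective g).injOn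
    simp only [MulAction.toPerm_apply, hsum, hw]

theorem eq_one_of_injective_refineWeight (hg : g ∈ MulAction.stabilizer (Equiv.Perm Ω) 𝓑)
    (hw : ∀ x, w (g • x) = w x) {n : ℕ} (hinj : ((refineWeight 𝓑)^[n] w).Injective) : g = 1 := by
  have hiter : ∀ x, ((refineWeight 𝓑)^[n] w) (g • x) = ((refineWeight 𝓑)^[n] w) x := by
    clear hinj
    induction n with
    | zero => exact hw
    | succ n ih =>
      rw [Function.iterate_succ_apply']
      exact refineWeight_smul hg ih
  exact Equiv.ext fun x => hinj (hiter x)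

end BlockDesigns

section Masks

/-- The subset of `Fin n` whose indicator is given by the binary digits of `m`. -/
def maskSet (n m : ℕ) : Finset (Fin n) := {i | m.testBit i}

/-- The number whose binary digits `1` are at the positions in `l`. -/
def maskOf (l : List ℕ) : ℕ := l.foldr (fun i m => 2 ^ i ||| m) 0

/-- The sum of the entries of `l` at the positions of the binary digits `1` of `m`. -/
def maskSum {R : Type*} [AddMonoid R] : ℕ → List R → R
  | _, [] => 0
  | m, a :: l => (bif m.testBit 0 then a else 0) + maskSum (m / 2) l

theorem mem_maskSet {n m : ℕ} {i : Fin n} : i ∈ maskSet n m ↔ m.testBit i := by simp [maskSet]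

theorem testBit_maskOf (l : List ℕ) (i : ℕ) : (maskOf l).testBit i ↔ i ∈ l := by
  induction l with
  | nil => simp [maskOf]
  | cons a l ih =>
    have hcons : maskOf (a :: l) = 2 ^ a ||| maskOf l := rfl
    simp [hcons, ih, Nat.testBit_two_pow, @eq_comm _ i a]

theorem maskSum_ofFn {R : Type*} [AddCommMonoid R] {n : ℕ} (m : ℕ) (f : Fin n → R) :
    maskSum m (List.ofFn f) = ∑ i ∈ maskSet n m, f i := by
  rw [maskSet, Finset.sum_filter]
  induction n generalizing m with
  | zero => simp [maskSum]
  | succ n ih =>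
    rw [List.ofFn_succ, maskSum, ih, Fin.sum_univ_succ]
    simp [Nat.testBit_succ, Bool.cond_eq_ite]

end Masks

section ProjectiveBlocks

open OnePoint
open scoped Pointwise

variable {α : Type}

local instance fact_prime_thirtyOne : Fact (Nat.Prime 31) := ⟨by norm_num⟩

/-- The point labels `0, …, 30` stand for the elements of `ZMod 31`, the label `31` for `∞`. -/
def pointOfLabel : Fin 32 ≃ OnePoint (ZMod 31) := finSuccEquivLast

/-- The action of `GL₂(F₃₁)` on the labels of the projective line. -/
def glPerm : GL (Fin 2) (ZMod 31) →* Equiv.Perm (Fin 32) :=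
  pointOfLabel.symm.permCongrHom.toMonoidHom.comp
    (MulAction.toPermHom (GL (Fin 2) (ZMod 31)) (OnePoint (ZMod 31)))

/-- The map `x ↦ a * x + b` of the projective line on labels. -/
def affineLabel (a b x : ℕ) : ℕ := if x = 31 then 31 else (a * x + b) % 31

/-- The map `x ↦ x⁻¹` of the projective line on labels. -/
def invLabel (x : ℕ) : ℕ := if x = 31 then 0 else if x = 0 then 31 else x ^ 29 % 31

/-- The masks of the images of a block under the maps `x ↦ 3 ^ i * x + b` with `i < n`. -/
def affineMasks (n : ℕ) (B : List ℕ) : List ℕ :=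
  (List.range n).flatMap fun i => (List.range 31).map fun b =>
    maskOf (B.map (affineLabel (3 ^ i) b))

/-- The `PGL₂(F₃₁)`-orbit of a `12`-point block, as masks. The orbit has `29760 / 60` elements,
since the stabilizer of a block is icosahedral. It splits under the affine group into the blocks
through `∞` and the others. -/
def blockMasks : List ℕ :=
  affineMasks 6 [0, 3, 5, 6, 9, 10, 12, 17, 18, 20, 24, 31] ++
    affineMasks 10 [0, 1, 2, 3, 5, 13, 15, 17, 21, 24, 26, 27]

/-- The blocks of the incidence structure on the labels of the projective line whose automorphism
group is `PGL₂(F₃₁)`. -/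
def blocks : Finset (Finset (Fin 32)) := (blockMasks.map (maskSet 32)).toFinset

/-- The checked form of the statement that the relabelling `f` permutes the blocks. -/
def permutesMasks (f : ℕ → ℕ) : Bool :=
  forceMap id blockMasks fun ms =>
    forceMap (fun m => maskOf (((List.range 32).filter fun i => m.testBit i).map f)) ms fun ms' =>
      radixSort 32 ms' == radixSort 32 ms

theorem smul_maskSet {g : Equiv.Perm (Fin 32)} {f : ℕ → ℕ} (hf : ∀ x, (g x : ℕ) = f x) (m : ℕ) :
    g • maskSet 32 m =
      maskSet 32 (maskOf (((List.range 32).filter fun i => m.testBit i).map f)) := by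
  ext x
  obtain ⟨y, rfl⟩ := g.surjective x
  rw [← Equiv.Perm.smul_def, Finset.smul_mem_smul_finset_iff, mem_maskSet, mem_maskSet,
    testBit_maskOf]
  simp only [Equiv.Perm.smul_def, hf, List.mem_map, List.mem_filter, List.mem_range]
  refine ⟨fun hy => ⟨y, ⟨y.isLt, hy⟩, rfl⟩, ?_⟩
  rintro ⟨z, ⟨hz, hmz⟩, hzy⟩
  obtain rfl : y = ⟨z, hz⟩ := g.injective (Fin.ext (by rw [hf, hf, ← hzy]))
  exact hmz

theorem mem_stabilizer_blocks {g : Equiv.Perm (Fin 32)} {f : ℕ → ℕ} (hf : ∀ x, (g x : ℕ) = f x)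
    (h : permutesMasks f = true) : g ∈ MulAction.stabilizer (Equiv.Perm (Fin 32)) blocks := by
  rw [permutesMasks, forceMap_eq, forceMap_eq, List.map_id, beq_iff_eq] at h
  have hperm := ((radixSort_perm _ _).symm.trans (.of_eq h)).trans (radixSort_perm _ _)
  refine MulAction.mem_stabilizer_finset'.2 fun B hB => ?_
  obtain ⟨m, hm, rfl⟩ := List.mem_map.1 (List.mem_toFinset.1 hB)
  rw [smul_maskSet hf]
  exact List.mem_toFinset.2 (List.mem_map_of_mem (hperm.subset (List.mem_map_of_mem hm)))

theorem permutesMasks_translation : permutesMasks (affineLabel 1 1) = true := by decide +kernel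

theorem permutesMasks_scaling : permutesMasks (affineLabel 3 0) = true := by decide +kernel

theorem permutesMasks_inv : permutesMasks invLabel = true := by decide +kernel

/-- The colour refinement `refineWeight` on lists of masks and weights. -/
def refineMasks (ms ws : List ℕ) (k : List ℕ → α) : α :=
  forceMap (fun m => maskSum m ws ^ 3) ms fun cs =>
    forceMap (fun i => (List.zipWith (fun m c => bif m.testBit i then c else 0) ms cs).sum)
      (List.range 32) k

/-- The roots modulo `735389` of the polynomial `P`, listed by the labels of the projective line in
an order compatible with the Galois action. -/
def rootSeed : Fin 32 → ℕ :=
  ![8222, 20063, 132368, 591102, 616506, 454049, 138645, 572114, 563860, 133855, 625027, 734013,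
    583776, 114107, 197242, 354137, 467195, 340268, 540280, 57706, 532003, 311388, 459777, 384676,
    553964, 692492, 544129, 703229, 677745, 709443, 367112, 56513]

theorem nodup_maskSum_rootSeed :
    (blockMasks.map fun m => maskSum m (List.ofFn rootSeed) % 735389).Nodup := by
  have hcheck : forceMap id blockMasks (fun ms =>
      forceMap id (List.ofFn rootSeed) fun as =>
        forceMap (fun m => maskSum m as % 735389) ms fun θs =>
          decide ((radixSort 20 θs).IsChain (· < ·))) = true := by decide +kernel
  rw [forceMap_eq, forceMap_eq, forceMap_eq, List.map_id, List.map_id, decide_eq_true_eq] at hcheck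
  exact nodup_of_isChain_radixSort hcheck

theorem nodup_blockMasks : (blockMasks.map (maskSet 32)).Nodup := by
  have hsum : (fun m => maskSum m (List.ofFn rootSeed) % 735389) =
      (fun B : Finset (Fin 32) => (∑ i ∈ B, rootSeed i) % 735389) ∘ maskSet 32 :=
    funext fun m => congrArg (· % 735389) (maskSum_ofFn m _)
  refine List.Nodup.of_map (fun B => (∑ i ∈ B, rootSeed i) % 735389) ?_
  rw [List.map_map, ← hsum]
  exact nodup_maskSum_rootSeed

@[to_additive]
theorem prod_blocks {M : Type*} [CommMonoid M] (f : Finset (Fin 32) → M) :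
    ∏ B ∈ blocks, f B = (blockMasks.map fun m => f (maskSet 32 m)).prod := by
  rw [blocks, List.prod_toFinset _ nodup_blockMasks, List.map_map]; rfl

theorem prod_blocks_filter {M : Type*} [CommMonoid M] (p : Finset (Fin 32) → Prop)
    [DecidablePred p] (f : Finset (Fin 32) → M) :
    ∏ B ∈ blocks with p B, f B =
      ((blockMasks.filter fun m => p (maskSet 32 m)).map fun m => f (maskSet 32 m)).prod := by
  have hfilter : blocks.filter p = ((blockMasks.map (maskSet 32)).filter (p ·)).toFinset := by
    simp only [blocks, List.toFinset_filter, decide_eq_true_eq]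
  rw [hfilter, List.prod_toFinset _ (nodup_blockMasks.filter _), List.filter_map, List.map_map]
  rfl

theorem refineMasks_blockMasks (w : Fin 32 → ℕ) (k : List ℕ → α) :
    refineMasks blockMasks (List.ofFn w) k = k (List.ofFn (refineWeight blocks w)) := by
  rw [refineMasks, forceMap_eq, forceMap_eq, List.ofFn_eq_map, List.ofFn_eq_map,
    ← List.map_coe_finRange_eq_range, List.map_map]
  refine congrArg k (List.map_congr_left fun i _ => ?_)
  rw [refineWeight, Finset.sum_filter, sum_blocks]
  simp only [Function.comp_apply, List.zipWith_map_right, List.zipWith_self, ← List.ofFn_eq_map,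
    maskSum_ofFn, mem_maskSet, Bool.cond_eq_ite]

theorem glPerm_symm_apply (g : GL (Fin 2) (ZMod 31)) (y : OnePoint (ZMod 31)) :
    glPerm g (pointOfLabel.symm y) = pointOfLabel.symm (g • y) :=
  congrArg (fun y => pointOfLabel.symm (g • y)) (pointOfLabel.apply_symm_apply y)

theorem val_symm_infty : (pointOfLabel.symm ∞ : ℕ) = 31 := rfl

theorem val_symm_coe (x : ZMod 31) : (pointOfLabel.symm (x : OnePoint (ZMod 31)) : ℕ) = x.val :=
  congrArg Fin.val (finSuccEquivLast_symm_some (n := 31) x)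

theorem val_glPerm_affineGL (a : (ZMod 31)ˣ) (b : ZMod 31) (x : Fin 32) :
    (glPerm (affineGL a b) x : ℕ) = affineLabel (a : ZMod 31).val b.val x := by
  obtain ⟨y, rfl⟩ := pointOfLabel.symm.surjective x
  rw [glPerm_symm_apply]
  induction y using OnePoint.rec with
  | infty => rw [affineGL_smul_infty, val_symm_infty, affineLabel, if_pos rfl]
  | coe x =>
    rw [affineGL_smul_coe, val_symm_coe, val_symm_coe, affineLabel, if_neg x.val_lt.ne,
      ZMod.val_add, ZMod.val_mul, Nat.mod_add_mod]

theorem val_glPerm_invGL (x : Fin 32) : (glPerm invGL x : ℕ) = invLabel x := by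
  have hinv : ∀ x : ZMod 31, x ≠ 0 → x⁻¹.val = x.val ^ 29 % 31 := by decide +kernel
  obtain ⟨y, rfl⟩ := pointOfLabel.symm.surjective x
  rw [glPerm_symm_apply]
  induction y using OnePoint.rec with
  | infty =>
    rw [invGL_smul_infty, val_symm_infty, val_symm_coe, invLabel, if_pos rfl, ZMod.val_zero]
  | coe x =>
    rw [invGL_smul_coe, val_symm_coe, invLabel, if_neg x.val_lt.ne]
    by_cases hx : x = 0
    · rw [if_pos hx, val_symm_infty, if_pos ((ZMod.val_eq_zero x).2 hx)]
    · rw [if_neg hx, val_symm_coe, if_neg (mt (ZMod.val_eq_zero x).1 hx), hinv x hx]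

/-- The labels of the base points `0, 1, ∞` of the projective line. -/
def baseLabel : Fin 3 ↪ Fin 32 := (zeroOneInfty (ZMod 31)).trans pointOfLabel.symm.toEmbedding

theorem exists_glPerm_baseLabel_eq (e : Fin 3 ↪ Fin 32) :
    ∃ h, ∀ i, glPerm h (baseLabel i) = e i := by
  obtain ⟨h, hh⟩ := MulAction.exists_smul_eq (GL (Fin 2) (ZMod 31)) (zeroOneInfty (ZMod 31))
    (e.trans pointOfLabel.toEmbedding)
  refine ⟨h, fun i => ?_⟩
  have hi : h • zeroOneInfty (ZMod 31) i = pointOfLabel (e i) := DFunLike.congr_fun hh i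
  exact (glPerm_symm_apply h _).trans (pointOfLabel.symm_apply_eq.2 hi)

theorem ker_glPerm : glPerm.ker = Subgroup.center (GL (Fin 2) (ZMod 31)) := by
  rw [← ker_toPermHom_onePoint]
  exact MonoidHom.ker_mulEquiv_comp
    (MulAction.toPermHom (GL (Fin 2) (ZMod 31)) (OnePoint (ZMod 31))) pointOfLabel.symm.permCongrHom

theorem range_glPerm_le : glPerm.range ≤ MulAction.stabilizer (Equiv.Perm (Fin 32)) blocks := by
  have hgen : ∀ a : (ZMod 31)ˣ, ∃ n : ℕ, Units.mk0 (3 : ZMod 31) (by decide) ^ n = a := fun a =>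
    have hpow : ∀ x : ZMod 31, x ≠ 0 → ∃ n : Fin 30, 3 ^ (n : ℕ) = x := by decide
    (hpow a a.ne_zero).imp' Fin.val fun n hn => Units.ext hn
  rw [MonoidHom.range_eq_map, Subgroup.map_le_iff_le_comap]
  refine (eq_top_of_affineGL_mem_of_invGL_mem (ker_glPerm.symm.trans_le (Subgroup.ker_le_comap _ _))
    (exists_affineGL_mem ?_ ?_ hgen fun b => ⟨b.val, ZMod.natCast_zmod_val b⟩) ?_).ge
  · exact mem_stabilizer_blocks (val_glPerm_affineGL 1 1) permutesMasks_translation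
  · exact mem_stabilizer_blocks (val_glPerm_affineGL _ 0) permutesMasks_scaling
  · exact mem_stabilizer_blocks val_glPerm_invGL permutesMasks_inv

/-- The weights `1`, `2`, `3` at the labels of `0`, `1`, `∞`. -/
def baseWeight (x : Fin 32) : ℕ := if x = 0 then 1 else if x = 1 then 2 else if x = 31 then 3 else 0

theorem injective_refineWeight_baseWeight : ((refineWeight blocks)^[3] baseWeight).Injective := by
  rw [← List.nodup_ofFn]
  have key : (forceMap id blockMasks fun ms =>
      refineMasks ms (List.ofFn baseWeight) fun w₁ => refineMasks ms w₁ fun w₂ =>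
      refineMasks ms w₂ fun w₃ => decide w₃.Nodup) = true := by decide +kernel
  rw [forceMap_eq, List.map_id, refineMasks_blockMasks, refineMasks_blockMasks,
    refineMasks_blockMasks] at key
  exact of_decide_eq_true key

theorem eq_one_of_apply_baseLabel {g : Equiv.Perm (Fin 32)}
    (hg : g ∈ MulAction.stabilizer (Equiv.Perm (Fin 32)) blocks)
    (hfix : ∀ i, g (baseLabel i) = baseLabel i) : g = 1 := by
  refine eq_one_of_injective_refineWeight hg (fun x => ?_) injective_refineWeight_baseWeight
  have hiff (i : Fin 3) : g x = baseLabel i ↔ x = baseLabel i := by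
    rw [← g.injective.eq_iff (a := x), hfix]
  have h0 : g x = 0 ↔ x = 0 := hiff 0
  have h1 : g x = 1 ↔ x = 1 := hiff 1
  have h2 : g x = 31 ↔ x = 31 := hiff 2
  simp only [Equiv.Perm.smul_def, baseWeight, h0, h1, h2]

theorem threeRigid_stabilizer_blocks :
    ThreeRigid (MulAction.stabilizer (Equiv.Perm (Fin 32)) blocks) := by
  intro g hg e he
  obtain ⟨h, hh⟩ := exists_glPerm_baseLabel_eq e
  have hmem := range_glPerm_le ⟨h, rfl⟩
  have hconj : (glPerm h)⁻¹ * g * glPerm h = 1 :=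
    eq_one_of_apply_baseLabel (mul_mem (mul_mem (inv_mem hmem) hg) hmem) fun i => by
      rw [Equiv.Perm.mul_apply, Equiv.Perm.mul_apply, hh, he, ← hh, Equiv.Perm.inv_def,
        Equiv.symm_apply_apply]
  rwa [mul_assoc, inv_mul_eq_one, eq_comm, mul_eq_right] at hconj

/-- An automorphism of the blocks agrees at three points with a projectivity. -/
theorem range_glPerm_eq : glPerm.range = MulAction.stabilizer (Equiv.Perm (Fin 32)) blocks := by
  refine range_glPerm_le.antisymm fun g hg => ?_
  obtain ⟨h, hh⟩ := exists_glPerm_baseLabel_eq (baseLabel.trans g.toEmbedding)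
  refine ⟨h, inv_mul_eq_one.1 (eq_one_of_apply_baseLabel
    (mul_mem (inv_mem (range_glPerm_le ⟨h, rfl⟩)) hg) fun i => ?_)⟩
  rw [Equiv.Perm.mul_apply, Equiv.Perm.inv_def, Equiv.symm_apply_eq, hh]
  rfl

end ProjectiveBlocks

section KroneckerPacking

variable {w q : ℕ} {F G : (ZMod q)[X]} {n m s t M N : ℕ}

theorem sum_range_mul_pow_lt {B : ℕ} {c : ℕ → ℕ} (hc : ∀ i, c i < B) (n : ℕ) :
    ∑ i ∈ Finset.range n, c i * B ^ i < B ^ n := by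
  induction n with
  | zero => simp
  | succ n ih =>
    calc ∑ i ∈ Finset.range (n + 1), c i * B ^ i < B ^ n + c n * B ^ n := by
          rw [Finset.sum_range_succ]
          exact Nat.add_lt_add_right ih _
      _ = (c n + 1) * B ^ n := by ring
      _ ≤ B ^ (n + 1) := by
          rw [pow_succ']
          exact Nat.mul_le_mul_right _ (hc n)

theorem coeff_le_eval_one (f : ℕ[X]) (i : ℕ) : f.coeff i ≤ f.eval 1 := by
  rw [eval_eq_sum_range' (Nat.lt_add_of_pos_right (k := i + 1) (by simp))]
  simpa using Finset.single_le_sum (f := f.coeff) (fun _ _ => Nat.zero_le _)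
    (Finset.mem_range.2 (by omega))

theorem coeff_sum_range_monomial {R : Type*} [Semiring R] (c : ℕ → R) (n k : ℕ) :
    (∑ i ∈ Finset.range n, monomial i (c i)).coeff k = if k < n then c k else 0 := by
  simp [coeff_monomial]

theorem degree_sum_range_monomial_lt {R : Type*} [Semiring R] (c : ℕ → R) (n : ℕ) :
    (∑ i ∈ Finset.range n, monomial i (c i)).degree < n :=
  (degree_lt_iff_coeff_zero _ _).2 fun _ hk => by rw [coeff_sum_range_monomial, if_neg hk.not_gt]

theorem exists_eq_add_X_pow_mul {R : Type*} [Semiring R] {f : R[X]} (hf : f.degree < (m + n : ℕ)) :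
    ∃ g h : R[X], f = g + X ^ m * h ∧ g.degree < m ∧ h.degree < n := by
  refine ⟨∑ i ∈ Finset.range m, monomial i (f.coeff i),
    ∑ i ∈ Finset.range n, monomial i (f.coeff (m + i)), ?_,
    degree_sum_range_monomial_lt _ _, degree_sum_range_monomial_lt _ _⟩
  ext k
  simp only [coeff_add, coeff_X_pow_mul', coeff_sum_range_monomial]
  rcases lt_or_ge k m with hkm | hmk
  · rw [if_pos hkm, if_neg hkm.not_ge, add_zero]
  · rw [if_neg hmk.not_gt, if_pos hmk, zero_add, Nat.add_sub_cancel' hmk]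
    split_ifs with hk
    · rfl
    · exact (degree_lt_iff_coeff_zero _ _).1 hf k (by omega)

theorem eval_lt_pow {f : ℕ[X]} {B : ℕ} (hf : f.degree < n) (hcoeff : ∀ i, f.coeff i < B) :
    f.eval B < B ^ n := by
  have hsum : f = ∑ i ∈ Finset.range n, monomial i (f.coeff i) := by
    ext k
    rw [coeff_sum_range_monomial]
    split_ifs with hk
    · rfl
    · exact (degree_lt_iff_coeff_zero _ _).1 hf k (not_lt.1 hk)
  rw [hsum, eval_finsetSum]
  simpa only [eval_monomial] using sum_range_mul_pow_lt hcoeff n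

/-- `N` is the value at `2 ^ w` of a polynomial over `ℕ` with fewer than `n` coefficients, of sum at
most `s`, which reduces to `F` modulo `q`. Arithmetic on such polynomials becomes arithmetic on big
numbers, as long as `s < 2 ^ w`. -/
def Packs (w : ℕ) (F : (ZMod q)[X]) (n s N : ℕ) : Prop :=
  ∃ f : ℕ[X], f.degree < n ∧ f.eval 1 ≤ s ∧ f.eval (2 ^ w) = N ∧ f.map (Nat.castRingHom _) = F

namespace Packs

theorem mono (h : Packs w F n s N) (hn : n ≤ m) (hs : s ≤ t) : Packs w F m t N := by
  obtain ⟨f, hdeg, hsum, heval, hmap⟩ := h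
  exact ⟨f, hdeg.trans_le (by exact_mod_cast hn), hsum.trans hs, heval, hmap⟩

theorem const (a : ℕ) : Packs w (C (a : ZMod q)) 1 a a :=
  ⟨C a, degree_C_lt, by simp, by simp, by simp⟩

theorem mul (hM : Packs w F m s M) (hN : Packs w G n t N) :
    Packs w (F * G) (m + n) (s * t) (M * N) := by
  obtain ⟨f, hdeg, hsum, rfl, rfl⟩ := hM
  obtain ⟨g, hdeg', hsum', rfl, rfl⟩ := hN
  refine ⟨f * g, ?_, ?_, by rw [eval_mul], Polynomial.map_mul _⟩
  · rw [degree_lt_iff_coeff_zero] at hdeg hdeg' ⊢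
    refine fun k hk => (coeff_mul f g k).trans (Finset.sum_eq_zero fun ij hij => ?_)
    rw [Finset.HasAntidiagonal.mem_antidiagonal] at hij
    obtain hi | hj : m ≤ ij.1 ∨ n ≤ ij.2 := by omega
    · rw [hdeg _ hi, zero_mul]
    · rw [hdeg' _ hj, mul_zero]
  · rw [eval_mul]
    exact Nat.mul_le_mul hsum hsum'

theorem append (hM : Packs w F m s M) (hN : Packs w G n t N) :
    Packs w (F + X ^ m * G) (m + n) (s + t) (M + N * 2 ^ (w * m)) := by
  obtain ⟨f, hdeg, hsum, rfl, rfl⟩ := hM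
  obtain ⟨g, hdeg', hsum', rfl, rfl⟩ := hN
  refine ⟨f + X ^ m * g, ?_, ?_, ?_, by simp⟩
  · rw [degree_lt_iff_coeff_zero] at hdeg hdeg' ⊢
    intro k hk
    rw [coeff_add, hdeg k (by omega), coeff_X_pow_mul', if_pos (by omega), hdeg' _ (by omega),
      add_zero]
  · simpa using add_le_add hsum hsum'
  · simp [pow_mul, mul_comm]

theorem eq_C (hN : Packs w F 1 s N) : F = C (N : ZMod q) := by
  obtain ⟨f, hdeg, -, rfl, rfl⟩ := hN
  rw [eq_C_of_degree_le_zero (Nat.WithBot.lt_one_iff_le_zero.1 hdeg)]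
  simp

theorem coeff_eq_zero (hN : Packs w F n s N) {i : ℕ} (hi : n ≤ i) : F.coeff i = 0 := by
  obtain ⟨f, hdeg, -, -, rfl⟩ := hN
  rw [coeff_map, (degree_lt_iff_coeff_zero _ _).1 hdeg i hi, map_zero]

theorem split (hN : Packs w F (m + n) s N) (hs : s < 2 ^ w) : ∃ G H : (ZMod q)[X],
    F = G + X ^ m * H ∧ Packs w G m s (N % 2 ^ (w * m)) ∧ Packs w H n s (N / 2 ^ (w * m)) := by
  obtain ⟨f, hdeg, hsum, rfl, rfl⟩ := hN
  obtain ⟨g, h, rfl, hg, hh⟩ := exists_eq_add_X_pow_mul hdeg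
  have hsum' : g.eval 1 + h.eval 1 ≤ s := by simpa using hsum
  have hlt : g.eval (2 ^ w) < 2 ^ (w * m) := by
    rw [pow_mul]
    exact eval_lt_pow hg fun i => (coeff_le_eval_one g i).trans_lt (by omega)
  have heval : (g + X ^ m * h).eval (2 ^ w) = g.eval (2 ^ w) + 2 ^ (w * m) * h.eval (2 ^ w) := by
    simp [pow_mul]
  refine ⟨_, _, by simp, ⟨g, hg, by omega, ?_, rfl⟩, ⟨h, hh, by omega, ?_, rfl⟩⟩
  · rw [heval, Nat.add_mul_mod_self_left, Nat.mod_eq_of_lt hlt]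
  · rw [heval, Nat.add_mul_div_left _ _ (by positivity), Nat.div_eq_of_lt hlt, zero_add]

end Packs

/-- Reduction modulo `q` of the `2 ^ d` digits of `N` in base `2 ^ w`. -/
def reduceDigits (w q : ℕ) : ℕ → ℕ → ℕ
  | 0, N => N % q
  | d + 1, N => force N fun N => bif N == 0 then 0 else
      force (N >>> (w <<< d)) fun h =>
        reduceDigits w q d (N - h <<< (w <<< d)) + reduceDigits w q d h <<< (w <<< d)

theorem reduceDigits_zero_right (d : ℕ) : reduceDigits w q d 0 = 0 := by
  cases d <;> simp [reduceDigits, force_eq]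

theorem reduceDigits_succ (d N : ℕ) :
    reduceDigits w q (d + 1) N = reduceDigits w q d (N % 2 ^ (w * 2 ^ d)) +
      reduceDigits w q d (N / 2 ^ (w * 2 ^ d)) * 2 ^ (w * 2 ^ d) := by
  have hmod : N - N / 2 ^ (w * 2 ^ d) * 2 ^ (w * 2 ^ d) = N % 2 ^ (w * 2 ^ d) := by
    rw [Nat.mod_eq_sub_div_mul]
  rw [reduceDigits, force_eq, force_eq]
  simp only [Nat.shiftRight_eq_div_pow, Nat.shiftLeft_eq, hmod]
  rcases eq_or_ne N 0 with rfl | hN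
  · simp [reduceDigits_zero_right]
  · rw [beq_false_of_ne hN, cond_false]

theorem Packs.reduceDigits [NeZero q] (hs : s < 2 ^ w) {d : ℕ} (hN : Packs w F (2 ^ d) s N) :
    Packs w F (2 ^ d) (2 ^ d * q) (reduceDigits w q d N) := by
  induction d generalizing F N with
  | zero =>
    rw [pow_zero] at hN
    rw [hN.eq_C, ← ZMod.natCast_mod]
    exact (Packs.const _).mono (by simp) (by simpa using (Nat.mod_lt N (NeZero.pos q)).le)
  | succ d ih =>
    rw [pow_succ, mul_two] at hN
    obtain ⟨G, H, rfl, hG, hH⟩ := hN.split hs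
    rw [reduceDigits_succ]
    exact ((ih hG).append (ih hH)).mono (by rw [pow_succ, mul_two]) (by rw [pow_succ]; linarith)

/-- Checks that the `2 ^ d` digits of `N` in base `2 ^ w` are at most `b` in absolute value modulo
`q`. -/
def smallDigits (w q b : ℕ) : ℕ → ℕ → Bool
  | 0, N => (N + b) % q ≤ 2 * b
  | d + 1, N => force N fun N => force (N >>> (w <<< d)) fun h =>
      smallDigits w q b d (N - h <<< (w <<< d)) && smallDigits w q b d h

theorem natAbs_valMinAbs_natCast_le [NeZero q] {b : ℕ} (h : (N + b) % q ≤ 2 * b) :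
    (N : ZMod q).valMinAbs.natAbs ≤ b := by
  have hdiff : ((((N + b) % q : ℕ) - b : ℤ) : ZMod q) = N := by
    push_cast [ZMod.natCast_mod]
    ring
  have hmin := ZMod.natAbs_min_of_le_div_two q (N : ZMod q).valMinAbs (((N + b) % q : ℕ) - b)
    (by rw [ZMod.coe_valMinAbs, hdiff]) (ZMod.natAbs_valMinAbs_le _)
  omega

theorem Packs.natAbs_valMinAbs_coeff_le [NeZero q] (hs : s < 2 ^ w) {b d : ℕ}
    (hN : Packs w F (2 ^ d) s N)
    (h : smallDigits w q b d N = true) (i : ℕ) : (F.coeff i).valMinAbs.natAbs ≤ b := by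
  induction d generalizing F N i with
  | zero =>
    rw [pow_zero] at hN
    rw [smallDigits, decide_eq_true_eq] at h
    rw [hN.eq_C, coeff_C]
    split_ifs
    · exact natAbs_valMinAbs_natCast_le h
    · simp
  | succ d ih =>
    rw [pow_succ, mul_two] at hN
    obtain ⟨G, H, rfl, hG, hH⟩ := hN.split hs
    rw [smallDigits, force_eq, force_eq, Bool.and_eq_true, Nat.shiftRight_eq_div_pow,
      Nat.shiftLeft_eq, Nat.shiftLeft_eq, ← Nat.mod_eq_sub_div_mul] at h
    rw [coeff_add, coeff_X_pow_mul']
    split_ifs with hi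
    · rw [hG.coeff_eq_zero hi, zero_add]
      exact ih hH h.2 _
    · rw [add_zero]
      exact ih hG h.1 i

/-- Products of adjacent pairs of packed polynomials with `2 ^ d` coefficients. -/
def mulAdjacent (w q d : ℕ) : List ℕ → List ℕ
  | M :: N :: l => reduceDigits w q (d + 1) (M * N) :: mulAdjacent w q d l
  | l => l

/-- Product of at most `2 ^ n` packed polynomials with `2 ^ d` coefficients. -/
def prodTree (w q : ℕ) : ℕ → ℕ → List ℕ → ℕ
  | 0, _, l => l.headD 1
  | n + 1, d, l => prodTree w q n (d + 1) (mulAdjacent w q d l)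

theorem length_mulAdjacent_le (d : ℕ) (l : List ℕ) :
    2 * (mulAdjacent w q d l).length ≤ l.length + 1 := by
  fun_induction mulAdjacent w q d l with
  | case1 M N l ih => simp only [List.length_cons]; omega
  | case2 l hl =>
    match l with
    | [] | [_] => simp
    | M :: N :: l => exact (hl M N l rfl).elim

theorem Packs.mulAdjacent [NeZero q] {d : ℕ} (hs : (2 ^ d * q) * (2 ^ d * q) < 2 ^ w)
    {Fs : List (ZMod q)[X]} {Ns : List ℕ}
    (h : List.Forall₂ (fun F N => Packs w F (2 ^ d) (2 ^ d * q) N) Fs Ns) :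
    ∃ Gs : List (ZMod q)[X], Gs.prod = Fs.prod ∧
      List.Forall₂ (fun F N => Packs w F (2 ^ (d + 1)) (2 ^ (d + 1) * q) N) Gs
        (mulAdjacent w q d Ns) := by
  fun_induction _root_.mulAdjacent w q d Ns generalizing Fs with
  | case1 M N l ih =>
    obtain _ | ⟨hM, _ | ⟨hN, hl⟩⟩ := h
    obtain ⟨Gs, hprod, hGs⟩ := ih hl
    have hMN := hM.mul hN
    rw [← mul_two, ← pow_succ] at hMN
    exact ⟨_ :: Gs, by simp only [List.prod_cons, hprod, mul_assoc],
      .cons (Packs.reduceDigits hs hMN) hGs⟩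
  | case2 l =>
    have hle : 2 ^ d ≤ 2 ^ (d + 1) := Nat.pow_le_pow_right two_pos d.le_succ
    exact ⟨Fs, rfl, h.imp fun F N hN => hN.mono hle (Nat.mul_le_mul_right q hle)⟩

theorem Packs.prodTree [NeZero q] {n d : ℕ} (hs : (2 ^ (d + n) * q) * (2 ^ (d + n) * q) < 2 ^ w)
    {Fs : List (ZMod q)[X]} {Ns : List ℕ} (hlen : Ns.length ≤ 2 ^ n)
    (h : List.Forall₂ (fun F N => Packs w F (2 ^ d) (2 ^ d * q) N) Fs Ns) :
    Packs w Fs.prod (2 ^ (d + n)) (2 ^ (d + n) * q) (prodTree w q n d Ns) := by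
  induction n generalizing d Fs Ns with
  | zero =>
    obtain _ | ⟨hN, _ | ⟨_, _⟩⟩ := h
    · rw [List.prod_nil, ← map_one C, ← Nat.cast_one]
      exact (Packs.const 1).mono Nat.one_le_two_pow
        (Nat.mul_pos (Nat.two_pow_pos d) (NeZero.pos q))
    · rwa [List.prod_singleton]
    · simp at hlen
  | succ n ih =>
    have hle : 2 ^ d * q ≤ 2 ^ (d + (n + 1)) * q :=
      Nat.mul_le_mul_right q (Nat.pow_le_pow_right two_pos (by omega))
    obtain ⟨Gs, hprod, hGs⟩ := Packs.mulAdjacent ((Nat.mul_le_mul hle hle).trans_lt hs) h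
    have hlen' := length_mulAdjacent_le (w := w) (q := q) d Ns
    rw [← hprod, show d + (n + 1) = d + 1 + n by ring]
    exact ih (by rwa [show d + 1 + n = d + (n + 1) by ring])
      (by rw [pow_succ] at hlen; omega) hGs

theorem Packs.X_sub_C [NeZero q] (θ : ℕ) :
    Packs w (X - C (θ : ZMod q)) (2 ^ 1) (2 ^ 1 * q) (2 ^ w + (q - θ % q)) := by
  have hlt := Nat.mod_lt θ (NeZero.pos q)
  refine ⟨X + C (q - θ % q), (degree_X_add_C (R := ℕ) _).trans_lt (by norm_num), ?_, by simp, ?_⟩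
  · rw [eval_add, eval_X, eval_C]
    omega
  · rw [Polynomial.map_add, map_X, map_C, eq_natCast (Nat.castRingHom (ZMod q)),
      Nat.cast_sub hlt.le, ZMod.natCast_self, ZMod.natCast_mod, zero_sub, C_neg, sub_eq_add_neg]

theorem Packs.const_mul (hN : Packs w F n s N) (c : ℕ) :
    Packs w (C (c : ZMod q) * F) n (c * s) (c * N) := by
  obtain ⟨f, hdeg, hsum, rfl, rfl⟩ := hN
  refine ⟨C c * f, ?_, ?_, by simp, by simp⟩
  · rw [degree_lt_iff_coeff_zero] at hdeg ⊢
    exact fun k hk => by rw [coeff_C_mul, hdeg k hk, mul_zero]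
  · rw [eval_mul, eval_C]
    exact Nat.mul_le_mul_left c hsum

theorem Packs.sum {ι : Type*} [Fintype ι] {F : ι → (ZMod q)[X]} {N : ι → ℕ}
    (h : ∀ x, Packs w (F x) n s (N x)) :
    Packs w (∑ x, F x) n (Fintype.card ι * s) (∑ x, N x) := by
  choose f hdeg hsum heval hmap using h
  refine ⟨∑ x, f x, ?_, ?_, ?_, ?_⟩
  · exact (degree_sum_le _ _).trans_lt
      ((Finset.sup_lt_iff (WithBot.bot_lt_coe n)).2 fun x _ => hdeg x)
  · rw [eval_finsetSum, ← smul_eq_mul, ← Finset.card_univ]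
    exact Finset.sum_le_card_nsmul _ _ _ fun x _ => hsum x
  · simp_rw [eval_finsetSum, heval]
  · simp_rw [Polynomial.map_sum, hmap]

end KroneckerPacking

section Interpolation

variable {ι A : Type*} [Fintype ι] [CommRing A]

/-- If `p` is a multiple of `∏ x, (X - a x)`, this polynomial in `X` over `A[Y]` takes the value
`p' (a x) * F x` at `a x`. -/
noncomputable def interpolant (p : A[X]) (a : ι → A) (F : ι → A[X]) : A[X][X] :=
  ∑ x, (p /ₘ (X - C (a x))).map C * C (F x)

theorem coeff_interpolant (p : A[X]) (a : ι → A) (F : ι → A[X]) (k : ℕ) :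
    (interpolant p a F).coeff k = ∑ x, C ((p /ₘ (X - C (a x))).coeff k) * F x := by
  simp [interpolant]

theorem natDegree_interpolant_le (p : A[X]) (a : ι → A) (F : ι → A[X]) :
    (interpolant p a F).natDegree ≤ p.natDegree :=
  natDegree_sum_le_of_forall_le _ _ fun x _ => (natDegree_mul_C_le _ _).trans <|
    natDegree_map_le.trans <|
      (natDegree_divByMonic p (monic_X_sub_C (a x))).trans_le (Nat.sub_le _ _)

theorem natDegree_coeff_interpolant_le (p : A[X]) (a : ι → A) {F : ι → A[X]} {n : ℕ}
    (hF : ∀ x, (F x).natDegree ≤ n) (k : ℕ) : ((interpolant p a F).coeff k).natDegree ≤ n := by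
  rw [coeff_interpolant]
  exact natDegree_sum_le_of_forall_le _ _ fun x _ => (natDegree_C_mul_le _ _).trans (hF x)

variable {p : A[X]} {a : ι → A} (hroot : ∀ x, p.IsRoot (a x))
  (ha : Pairwise fun x y => IsUnit (a x - a y))

include hroot ha

theorem eval_interpolant (F : ι → A[X]) (x : ι) :
    (interpolant p a F).eval (C (a x)) = C (p.derivative.eval (a x)) * F x := by
  have hmul (y : ι) : (X - C (a y)) * (p /ₘ (X - C (a y))) = p :=
    mul_divByMonic_eq_iff_isRoot.2 (hroot y)
  have hself : (p /ₘ (X - C (a x))).eval (a x) = p.derivative.eval (a x) := by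
    conv_rhs => rw [← hmul x]
    simp
  have hother (y : ι) (hyx : y ≠ x) : (p /ₘ (X - C (a y))).eval (a x) = 0 := by
    refine (ha hyx.symm).mul_right_eq_zero.1 ?_
    simpa [(hroot x).eq_zero] using congrArg (eval (a x)) (hmul y)
  rw [interpolant, eval_finsetSum, Finset.sum_eq_single x]
  · rw [eval_mul, eval_C, eval_map, eval₂_at_apply, hself]
  · intro y _ hyx
    rw [eval_mul, eval_map, eval₂_at_apply, hother y hyx, C_0, zero_mul]
  · exact fun h => (h (Finset.mem_univ x)).elim

theorem prod_X_sub_C_dvd : ∏ x, (X - C (a x)) ∣ p :=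
  Finset.prod_dvd_of_coprime (fun _ _ _ _ hxy => isCoprime_X_sub_C_of_isUnit_sub (ha hxy))
    fun x _ => dvd_iff_isRoot.2 (hroot x)

theorem prod_X_sub_C_eq (hp : p.Monic) (hdeg : p.natDegree = Fintype.card ι) :
    ∏ x, (X - C (a x)) = p := by
  nontriviality A
  refine (eq_of_monic_of_dvd_of_natDegree_le (monic_prod_X_sub_C a Finset.univ) hp
    (prod_X_sub_C_dvd hroot ha) ?_).symm
  rw [natDegree_prod_of_monic _ _ fun x _ => monic_X_sub_C (a x), hdeg]
  simp

end Interpolation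

section BlockPolynomials

variable {ι A B : Type*} [CommRing A] [CommRing B]

/-- The resolvent of the values `a`, whose roots are the sums over the blocks. -/
noncomputable def blockResolvent (𝓑 : Finset (Finset ι)) (a : ι → A) : A[X] :=
  ∏ B ∈ 𝓑, (X - C (∑ i ∈ B, a i))

theorem map_blockResolvent (f : A →+* B) (𝓑 : Finset (Finset ι)) (a : ι → A) :
    (blockResolvent 𝓑 a).map f = blockResolvent 𝓑 (f ∘ a) := by
  simp only [blockResolvent, Polynomial.map_prod, Polynomial.map_sub, map_X, map_C, _root_.map_sum,
    Polynomial.map_sum, Function.comp_apply]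

theorem isRoot_blockResolvent_iff [IsDomain A] {𝓑 : Finset (Finset ι)} {a : ι → A} {c : A} :
    (blockResolvent 𝓑 a).IsRoot c ↔ ∃ B ∈ 𝓑, c = ∑ i ∈ B, a i := by
  simp only [blockResolvent, IsRoot, eval_prod, Finset.prod_eq_zero_iff, eval_sub, eval_X, eval_C,
    sub_eq_zero]

variable [DecidableEq ι]

/-- The product of `X - ∑ i ∈ B, a i` over the blocks `B` that contain the point `x`, if `s` is
true, or do not contain `x`, if `s` is false. -/
noncomputable def blockPoly (𝓑 : Finset (Finset ι)) (a : ι → A) (s : Bool) (x : ι) : A[X] :=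
  ∏ B ∈ 𝓑 with decide (x ∈ B) = s, (X - C (∑ i ∈ B, a i))

theorem blockPoly_true_mul_false (𝓑 : Finset (Finset ι)) (a : ι → A) (x : ι) :
    blockPoly 𝓑 a true x * blockPoly 𝓑 a false x = blockResolvent 𝓑 a := by
  simp only [blockPoly, blockResolvent, decide_eq_true_eq, decide_eq_false_iff_not]
  exact Finset.prod_filter_mul_prod_filter_not 𝓑 (x ∈ ·) _

theorem map_blockPoly (f : A →+* B) (𝓑 : Finset (Finset ι)) (a : ι → A) (s : Bool) (x : ι) :
    (blockPoly 𝓑 a s x).map f = blockPoly 𝓑 (f ∘ a) s x := by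
  simp only [blockPoly, Polynomial.map_prod, Polynomial.map_sub, map_X, map_C, _root_.map_sum,
    Polynomial.map_sum, Function.comp_apply]

theorem natDegree_blockPoly_le (𝓑 : Finset (Finset ι)) (a : ι → A) (s : Bool) (x : ι) :
    (blockPoly 𝓑 a s x).natDegree ≤ 𝓑.card :=
  (natDegree_prod_le _ _).trans <| (Finset.sum_le_card_nsmul _ _ 1 fun _ _ =>
    natDegree_X_sub_C_le _).trans <| by simpa using Finset.card_filter_le _ _

theorem isRoot_blockPoly_iff [IsDomain A] {𝓑 : Finset (Finset ι)} {a : ι → A}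
    (ha : Set.InjOn (fun B => ∑ i ∈ B, a i) 𝓑) {B : Finset ι} (hB : B ∈ 𝓑) {s : Bool} {x : ι} :
    (blockPoly 𝓑 a s x).IsRoot (∑ i ∈ B, a i) ↔ decide (x ∈ B) = s := by
  simp only [blockPoly, IsRoot, eval_prod, Finset.prod_eq_zero_iff, Finset.mem_filter, eval_sub,
    eval_X, eval_C, sub_eq_zero]
  exact ⟨fun ⟨B', ⟨hB', hs⟩, h⟩ => ha hB hB' h ▸ hs, fun h => ⟨B, ⟨hB, h⟩, rfl⟩⟩

theorem map_C_dvd_interpolant_mul_sub [Fintype ι] {p : A[X]} {a : ι → A}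
    (hroot : ∀ x, p.IsRoot (a x)) (ha : Pairwise fun x y => IsUnit (a x - a y)) (hp : p.Monic)
    (hdeg : p.natDegree = Fintype.card ι) (𝓑 : Finset (Finset ι)) :
    p.map C ∣ interpolant p a (blockPoly 𝓑 a true) * interpolant p a (blockPoly 𝓑 a false) -
      p.derivative.map C ^ 2 * C (blockResolvent 𝓑 a) := by
  have hmap : p.map C = ∏ x, (X - C (C (a x))) := by
    rw [← prod_X_sub_C_eq hroot ha hp hdeg]
    simp [Polynomial.map_prod]
  rw [hmap]
  refine prod_X_sub_C_dvd (fun x => ?_) fun x y hxy => ?_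
  · rw [IsRoot, eval_sub, eval_mul, eval_interpolant hroot ha, eval_interpolant hroot ha, eval_mul,
      eval_pow, eval_C, eval_map, eval₂_at_apply, ← blockPoly_true_mul_false 𝓑 a x]
    ring
  · simpa only [C_sub] using (ha hxy).map C

end BlockPolynomials

section InterpolantCheck

variable {w q : ℕ}

/-- Checks that the coefficients of an interpolant of packed polynomials `Ss` at `as` are at most
`b` in absolute value modulo `q`, from the `k`-th downwards. The list `us` holds the `k`-th
coefficients of the quotients by the `X - a`, and `c` the coefficients of the dividend. -/
def smallRows (w q b d : ℕ) (c : ℕ → ℕ) (as Ss : List ℕ) : ℕ → List ℕ → Bool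
  | 0, us => smallDigits w q b d (List.zipWith (· * ·) us Ss).sum
  | k + 1, us => smallDigits w q b d (List.zipWith (· * ·) us Ss).sum &&
      forceMap (fun t : ℕ × ℕ => (c (k + 1) + t.1 * t.2) % q) (as.zip us) fun us =>
        smallRows w q b d c as Ss k us

theorem zipWith_ofFn {α β γ : Type*} {r : ℕ} (f : α → β → γ) (u : Fin r → α) (v : Fin r → β) :
    List.zipWith f (List.ofFn u) (List.ofFn v) = List.ofFn fun x => f (u x) (v x) := by
  simp only [List.ofFn_eq_map, List.zipWith_map, List.zipWith_self]

theorem natAbs_valMinAbs_coeff_interpolant_le [NeZero q] {b d r k : ℕ} {c : ℕ → ℕ}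
    {p : (ZMod q)[X]} {F : Fin r → (ZMod q)[X]} {a u S : Fin r → ℕ}
    (hw : r * (q * (2 ^ d * q)) < 2 ^ w) (hc : ∀ i, p.coeff i = c i)
    (hS : ∀ x, Packs w (F x) (2 ^ d) (2 ^ d * q) (S x)) (huq : ∀ x, u x ≤ q)
    (hu : ∀ x, (u x : ZMod q) = (p /ₘ (X - C (a x : ZMod q))).coeff k)
    (h : smallRows w q b d c (List.ofFn a) (List.ofFn S) k (List.ofFn u) = true) {i : ℕ}
    (hi : i ≤ k) (j : ℕ) :
    (((interpolant p (fun x => (a x : ZMod q)) F).coeff i).coeff j).valMinAbs.natAbs ≤ b := by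
  have hrow {k : ℕ} {u : Fin r → ℕ} (huq : ∀ x, u x ≤ q)
      (hu : ∀ x, (u x : ZMod q) = (p /ₘ (X - C (a x : ZMod q))).coeff k)
      (h : smallDigits w q b d (∑ x, u x * S x) = true) :
      (((interpolant p (fun x => (a x : ZMod q)) F).coeff k).coeff j).valMinAbs.natAbs ≤ b := by
    rw [coeff_interpolant]
    simp only [← hu]
    refine Packs.natAbs_valMinAbs_coeff_le ?_ (Packs.sum fun x =>
      ((hS x).const_mul (u x)).mono le_rfl (Nat.mul_le_mul_right _ (huq x))) h j
    rwa [Fintype.card_fin]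
  induction k generalizing u with
  | zero =>
    rw [smallRows, zipWith_ofFn, List.sum_ofFn] at h
    exact Nat.le_zero.1 hi ▸ hrow huq hu h
  | succ k ih =>
    rw [smallRows, Bool.and_eq_true, zipWith_ofFn, List.sum_ofFn, forceMap_eq, List.zip,
      zipWith_ofFn, List.map_ofFn] at h
    rcases hi.eq_or_lt with rfl | hi
    · exact hrow huq hu h.1
    · refine ih (fun x => (Nat.mod_lt _ (NeZero.pos q)).le) (fun x => ?_) h.2 (Nat.lt_succ_iff.1 hi)
      rw [ZMod.natCast_mod, coeff_divByMonic_X_sub_C_rec, hc, ← hu]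
      push_cast
      ring

end InterpolantCheck

section CoefficientLists

variable {R S : Type*} [CommSemiring R] [CommSemiring S]

/-- The polynomial with the coefficients `l`, constant term first. -/
noncomputable def ofCoeffs (l : List R) : R[X] := l.foldr (fun c f => C c + X * f) 0

theorem ofCoeffs_cons (c : R) (l : List R) : ofCoeffs (c :: l) = C c + X * ofCoeffs l := rfl

theorem coeff_ofCoeffs (l : List R) (i : ℕ) : (ofCoeffs l).coeff i = l.getD i 0 := by
  induction l generalizing i with
  | nil => simp [ofCoeffs]
  | cons c l ih => cases i <;> simp [ofCoeffs_cons, ih, coeff_C]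

theorem map_ofCoeffs (f : R →+* S) (l : List R) : (ofCoeffs l).map f = ofCoeffs (l.map f) := by
  ext i
  simp only [coeff_map, coeff_ofCoeffs, List.getD_eq_getElem?_getD, List.getElem?_map]
  cases l[i]? <;> simp

theorem natDegree_ofCoeffs_le (l : List R) : (ofCoeffs l).natDegree ≤ l.length - 1 :=
  natDegree_le_iff_coeff_eq_zero.2 fun i hi => by
    rw [coeff_ofCoeffs, List.getD_eq_default _ _ (by omega)]

theorem ofCoeffs_replicate_zero (n : ℕ) : ofCoeffs (List.replicate n (0 : R)) = 0 := by
  ext i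
  rw [coeff_ofCoeffs, coeff_zero]
  rcases lt_or_ge i n with hi | hi
  · rw [List.getD_replicate _ hi]
  · rw [List.getD_eq_default _ _ (by simpa using hi)]

/-- Coefficientwise sum. -/
def addCoeffs : List R → List R → List R
  | [], l => l
  | l, [] => l
  | a :: l, b :: m => (a + b) :: addCoeffs l m

/-- Product of polynomials given by their coefficients. -/
def mulCoeffs (l m : List R) : List R :=
  l.foldr (fun a r => addCoeffs (m.map (a * ·)) (0 :: r)) []

/-- Derivative of a polynomial given by its coefficients. -/
def derivCoeffs : List R → List R
  | [] => []
  | _ :: l => addCoeffs l (0 :: derivCoeffs l)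

theorem ofCoeffs_addCoeffs (l m : List R) :
    ofCoeffs (addCoeffs l m) = ofCoeffs l + ofCoeffs m := by
  fun_induction addCoeffs l m with
  | case1 | case2 => simp [ofCoeffs]
  | case3 a l b m ih =>
    rw [ofCoeffs_cons, ofCoeffs_cons, ofCoeffs_cons, ih, C_add]
    ring

theorem ofCoeffs_map_mul_left (a : R) (l : List R) :
    ofCoeffs (l.map (a * ·)) = C a * ofCoeffs l := by
  induction l with
  | nil => simp [ofCoeffs]
  | cons b l ih =>
    rw [List.map_cons, ofCoeffs_cons, ofCoeffs_cons, ih, C_mul]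
    ring

theorem ofCoeffs_mulCoeffs (l m : List R) :
    ofCoeffs (mulCoeffs l m) = ofCoeffs l * ofCoeffs m := by
  induction l with
  | nil => simp [mulCoeffs, ofCoeffs]
  | cons a l ih =>
    rw [mulCoeffs, List.foldr_cons, ← mulCoeffs, ofCoeffs_addCoeffs, ofCoeffs_map_mul_left,
      ofCoeffs_cons, ofCoeffs_cons, ih, C_0]
    ring

theorem ofCoeffs_derivCoeffs (l : List R) :
    ofCoeffs (derivCoeffs l) = derivative (ofCoeffs l) := by
  induction l with
  | nil => simp [derivCoeffs, ofCoeffs]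
  | cons a l ih =>
    rw [derivCoeffs, ofCoeffs_addCoeffs, ofCoeffs_cons, ofCoeffs_cons, ih, derivative_add,
      derivative_C, derivative_mul, derivative_X, C_0]
    ring

theorem eval_ofCoeffs (a : R) (l : List R) :
    (ofCoeffs l).eval a = l.foldr (fun c r => c + a * r) 0 := by
  induction l with
  | nil => simp [ofCoeffs]
  | cons b l ih => simp [ofCoeffs_cons, ih]

end CoefficientLists

section Roots

/-- The coefficients of `P`, constant term first. -/
def coeffsP : List ℤ :=
  [-1261963, 20505628, -201167463, 521018178, -1492309000, 2380573824, -4062352344, 4607500922,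
    -5462615927, 4554764528, -4120267319, 2531110165, -1820871490, 751001257, -448568729, 66421685,
    -40645681, -28954961, 4369791, -7527575, 747906, -646195, 127410, 24707, -5921, 9300, -2480,
    713, -155, 0, 0, -4, 1]

/-- The integral model of `P`. -/
noncomputable def intP : ℤ[X] := ofCoeffs coeffsP

theorem natDegree_intP_le : intP.natDegree ≤ 32 := natDegree_ofCoeffs_le coeffsP

theorem coeff_intP (i : ℕ) : intP.coeff i = coeffsP.getD i 0 := coeff_ofCoeffs _ _

theorem monic_intP : intP.Monic :=
  monic_of_natDegree_le_of_coeff_eq_one 32 natDegree_intP_le (coeff_intP 32)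

theorem natDegree_intP : intP.natDegree = 32 :=
  natDegree_eq_of_le_of_coeff_ne_zero natDegree_intP_le (by rw [coeff_intP]; decide)

/-- The power of the totally split prime `735389` modulo which the roots are computed. -/
def rootModulus : ℕ := 735389 ^ 80

instance : NeZero rootModulus := ⟨pow_ne_zero 80 (by decide)⟩

instance : Fact (1 < rootModulus) := ⟨Nat.one_lt_pow (by decide) (by decide)⟩

/-- Evaluation at `a` modulo `q` of a polynomial given by its coefficients, constant term first. -/
def hornerMod (q a : ℕ) (cs : List ℕ) : ℕ := cs.foldr (fun c r => (c + a * r) % q) 0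

theorem natCast_hornerMod (q a : ℕ) (cs : List ℕ) :
    (hornerMod q a cs : ZMod q) =
      (ofCoeffs (cs.map (Nat.cast : ℕ → ZMod q))).eval (a : ZMod q) := by
  induction cs with
  | nil => simp [hornerMod, ofCoeffs]
  | cons c cs ih =>
    rw [List.map_cons, ofCoeffs_cons, eval_add, eval_C, eval_mul, eval_X, ← ih]
    simp [hornerMod]

/-- `n` steps of Newton's iteration modulo `q`, from the approximation `a` to a root of the
polynomial with coefficients `cs`. The coefficients of its derivative are `ds`, and `v` approximates
the inverse of minus the derivative at `a`. -/
def newtonMod (q : ℕ) (cs ds : List ℕ) : ℕ → ℕ → ℕ → ℕ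
  | 0, _, a => a
  | n + 1, v, a =>
    force ((a + hornerMod q a cs * v) % q) fun a =>
      force (v * (2 + hornerMod q a ds * v) % q) fun v => newtonMod q cs ds n v a

/-- The coefficients of `P` modulo `rootModulus`. -/
def coeffsMod : List ℕ := coeffsP.map fun c : ℤ => (c % rootModulus).toNat

/-- The coefficients of the derivative of a polynomial with coefficients `cs`, modulo
`rootModulus`. -/
def derivCoeffsMod (cs : List ℕ) : List ℕ :=
  (cs.tail.zip (List.range' 1 32)).map fun t => t.1 * t.2 % rootModulus

/-- The lift modulo `rootModulus` of a root `a` modulo `735389` of the polynomial with coefficients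
`cs` and derivative `ds`, by Newton's iteration. -/
def liftRoot (cs ds : List ℕ) (a : ℕ) : ℕ :=
  newtonMod rootModulus cs ds 7 (735389 - hornerMod 735389 a ds ^ (735389 - 2) % 735389) a

/-- The roots of `P` modulo `rootModulus`, labelled as `rootSeed`. -/
def liftedRoot : Fin 32 → ℕ := liftRoot coeffsMod (derivCoeffsMod coeffsMod) ∘ rootSeed

/-- `withRoots k` equals `k coeffsMod (List.ofFn liftedRoot)`, with both lists evaluated before `k`
is entered. -/
def withRoots {α : Type} (k : List ℕ → List ℕ → α) : α :=
  forceMap (fun c : ℤ => (c % rootModulus).toNat) coeffsP fun cs =>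
    forceMap id (derivCoeffsMod cs) fun ds => forceMap (liftRoot cs ds) (List.ofFn rootSeed) (k cs)

theorem withRoots_eq {α : Type} (k : List ℕ → List ℕ → α) :
    withRoots k = k coeffsMod (List.ofFn liftedRoot) := by
  rw [withRoots, forceMap_eq, ← coeffsMod, forceMap_eq, List.map_id, forceMap_eq, List.map_ofFn,
    liftedRoot]

theorem hornerMod_liftedRoot (x : Fin 32) : hornerMod rootModulus (liftedRoot x) coeffsMod = 0 := by
  have hcheck :
      withRoots (fun cs as => as.all fun a => hornerMod rootModulus a cs == 0) = true := by
    decide +kernel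
  rw [withRoots_eq, List.all_eq_true] at hcheck
  exact beq_iff_eq.1 (hcheck _ (List.mem_ofFn.2 ⟨x, rfl⟩))

theorem liftedRoot_mod (x : Fin 32) : liftedRoot x % 735389 = rootSeed x := by
  have hcheck :
      withRoots (fun _ as => decide (as.map (· % 735389) = List.ofFn rootSeed)) = true := by
    decide +kernel
  rw [withRoots_eq, decide_eq_true_eq, List.map_ofFn] at hcheck
  exact congrFun (List.ofFn_injective hcheck) x

theorem ofCoeffs_coeffsMod :
    ofCoeffs (coeffsMod.map (Nat.cast : ℕ → ZMod rootModulus)) = intP.map (Int.castRingHom _) := by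
  rw [intP, map_ofCoeffs, coeffsMod, List.map_map]
  refine congrArg ofCoeffs (List.map_congr_left fun c _ => ?_)
  have hnonneg : 0 ≤ c % (rootModulus : ℤ) :=
    Int.emod_nonneg _ (Int.natCast_ne_zero.2 (NeZero.ne rootModulus))
  rw [Function.comp_apply, eq_intCast, ← Int.cast_natCast (R := ZMod rootModulus),
    Int.toNat_of_nonneg hnonneg, ZMod.intCast_mod]

theorem isRoot_liftedRoot (x : Fin 32) :
    (intP.map (Int.castRingHom (ZMod rootModulus))).IsRoot (liftedRoot x) := by
  rw [IsRoot, ← ofCoeffs_coeffsMod, ← natCast_hornerMod, hornerMod_liftedRoot, Nat.cast_zero]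

instance : Fact (Nat.Prime 735389) := ⟨by norm_num⟩

theorem isUnit_liftedRoot_sub :
    Pairwise fun x y => IsUnit ((liftedRoot x : ZMod rootModulus) - liftedRoot y) := by
  have hinj : Function.Injective rootSeed := by decide
  intro x y hxy
  have hsub : (liftedRoot x : ZMod rootModulus) - liftedRoot y =
      ((liftedRoot x - liftedRoot y : ℤ) : ZMod rootModulus) := by push_cast; rfl
  rw [hsub, ZMod.coe_int_isUnit_iff_isCoprime, rootModulus, Nat.cast_pow,
    IsCoprime.pow_left_iff (by norm_num),
    (Nat.prime_iff_prime_int.1 Fact.out).irreducible.coprime_iff_not_dvd, ← Nat.modEq_iff_dvd,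
    Nat.ModEq, liftedRoot_mod, liftedRoot_mod]
  exact fun h => hxy (hinj h).symm

end Roots

section CoefficientBounds

/-- The number of binary digits given to a coefficient modulo `rootModulus` in packed products. -/
def packingWidth : ℕ := 3200

/-- The packed form of `X - ∑ i, as i`, the sum being over the binary digits of `m`. -/
def packedFactor (as : List ℕ) (m : ℕ) : ℕ :=
  2 ^ packingWidth + (rootModulus - maskSum m as % rootModulus)

/-- The packed product of the factors listed in `Ns`, for at most `512` factors. -/
def packedProd (Ns : List ℕ) : ℕ := prodTree packingWidth rootModulus 9 1 Ns

/-- `withFactors k` calls `k` with the coefficients and the roots of `P`, the block masks and the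
packed factors of the resolvent, all evaluated beforehand. -/
def withFactors {α : Type} (k : List ℕ → List ℕ → List ℕ → List ℕ → α) : α :=
  withRoots fun cs as => forceMap id blockMasks fun ms =>
    forceMap (packedFactor as) ms (k cs as ms)

/-- Checks that the coefficients modulo `rootModulus` of the interpolant of the block polynomials
are at most `b` in absolute value. -/
def smallInterpolant (s : Bool) (b : ℕ) : Bool :=
  withFactors fun cs as ms Ns =>
    forceMap (fun x => packedProd (((ms.zip Ns).filter fun t => t.1.testBit x == s).map Prod.snd))
        (List.range 32) fun Ss =>
      smallRows packingWidth rootModulus b 10 (cs.getD · 0) as Ss 32 (List.replicate 32 0)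

set_option maxRecDepth 100000 in
theorem smallDigits_packedProd :
    withFactors (fun _ _ _ Ns => smallDigits packingWidth rootModulus (2 ^ 1200) 10
      (packedProd Ns)) = true := by
  decide +kernel

set_option maxRecDepth 100000 in
theorem smallInterpolant_true : smallInterpolant true (2 ^ 532) = true := by decide +kernel

set_option maxRecDepth 100000 in
theorem smallInterpolant_false : smallInterpolant false (2 ^ 811) = true := by decide +kernel

theorem withFactors_eq {α : Type} (k : List ℕ → List ℕ → List ℕ → List ℕ → α) :
    withFactors k = k coeffsMod (List.ofFn liftedRoot) blockMasks
      (blockMasks.map (packedFactor (List.ofFn liftedRoot))) := by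
  rw [withFactors, withRoots_eq, forceMap_eq, forceMap_eq, List.map_id]

theorem packs_packedProd {ms : List ℕ} (hms : ms.length ≤ 2 ^ 9) :
    Packs packingWidth
      (ms.map fun m => X - C (∑ i ∈ maskSet 32 m, (liftedRoot i : ZMod rootModulus))).prod
      (2 ^ 10) (2 ^ 10 * rootModulus)
      (packedProd (ms.map (packedFactor (List.ofFn liftedRoot)))) := by
  refine Packs.prodTree (n := 9) (d := 1) (by decide +kernel) (by rwa [List.length_map]) ?_
  rw [List.forall₂_map_left_iff, List.forall₂_map_right_iff, List.forall₂_same]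
  intro m _
  rw [packedFactor, maskSum_ofFn, ← Nat.cast_sum]
  exact Packs.X_sub_C _

theorem length_blockMasks_le : blockMasks.length ≤ 2 ^ 9 := by decide +kernel

theorem natAbs_coeff_blockResolvent_le (i : ℕ) :
    ((blockResolvent blocks fun x => (liftedRoot x : ZMod rootModulus)).coeff i).valMinAbs.natAbs
      ≤ 2 ^ 1200 := by
  have hsmall := smallDigits_packedProd
  rw [withFactors_eq] at hsmall
  rw [blockResolvent, prod_blocks]
  exact Packs.natAbs_valMinAbs_coeff_le (by decide +kernel) (packs_packedProd length_blockMasks_le)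
    hsmall i

theorem packs_blockPoly (s : Bool) (x : Fin 32) :
    Packs packingWidth (blockPoly blocks (fun i => (liftedRoot i : ZMod rootModulus)) s x)
      (2 ^ 10) (2 ^ 10 * rootModulus)
      (packedProd ((blockMasks.filter fun m => m.testBit x == s).map
        (packedFactor (List.ofFn liftedRoot)))) := by
  have hfilter : (fun m => decide (decide (x ∈ maskSet 32 m) = s)) =
      fun m : ℕ => m.testBit x == s := by
    funext m
    simp only [mem_maskSet, Bool.decide_eq_true, beq_eq_decide]
  rw [blockPoly, prod_blocks_filter, hfilter]
  exact packs_packedProd ((List.length_filter_le _ _).trans length_blockMasks_le)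

theorem natAbs_coeff_interpolant_le {s : Bool} {b : ℕ} (h : smallInterpolant s b = true) {i : ℕ}
    (hi : i ≤ 32) (j : ℕ) :
    (((interpolant (intP.map (Int.castRingHom (ZMod rootModulus)))
      (fun x => (liftedRoot x : ZMod rootModulus))
      (blockPoly blocks (fun x => (liftedRoot x : ZMod rootModulus)) s)).coeff i).coeff
        j).valMinAbs.natAbs ≤ b := by
  have hzip : (fun x : Fin 32 => packedProd (((blockMasks.zip
      (blockMasks.map (packedFactor (List.ofFn liftedRoot)))).filter
        fun t => t.1.testBit x == s).map Prod.snd)) =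
      fun x : Fin 32 => packedProd ((blockMasks.filter fun m => m.testBit x == s).map
        (packedFactor (List.ofFn liftedRoot))) := by
    funext x
    rw [List.zip_map_right, List.zip_eq_zipWith, List.zipWith_self, List.map_map, List.filter_map,
      List.map_map]
    rfl
  rw [smallInterpolant, withFactors_eq, forceMap_eq, ← List.map_coe_finRange_eq_range,
    List.map_map, ← List.ofFn_eq_map, Function.comp_def, hzip, ← List.ofFn_const] at h
  refine natAbs_valMinAbs_coeff_interpolant_le (c := (coeffsMod.getD · 0)) (by decide +kernel)
    (fun k => ?_) (packs_blockPoly s) (fun _ => Nat.zero_le _) (fun x => ?_) h hi j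
  · rw [← ofCoeffs_coeffsMod, coeff_ofCoeffs, ← Nat.cast_zero, List.getD_map]
  · rw [Nat.cast_zero, coeff_eq_zero_of_natDegree_lt]
    rw [natDegree_divByMonic _ (monic_X_sub_C _), natDegree_X_sub_C]
    exact (Nat.sub_le_sub_right (natDegree_map_le.trans natDegree_intP_le) 1).trans_lt
      (by norm_num)

end CoefficientBounds

section Specialization

variable {A B O O' : Type*} [CommRing A] [CommRing B] [CommRing O] [CommRing O']

/-- The homomorphism `A[Y][X] → O[Y]` that extends `f : A → O` and maps `X` to the constant `α`. -/
noncomputable def specialize (f : A →+* O) (α : O) : A[X][X] →+* O[X] :=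
  eval₂RingHom (mapRingHom f) (C α)

theorem map_specialize (g : O →+* O') (f : A →+* O) (α : O) (D : A[X][X]) :
    (specialize f α D).map g = specialize (g.comp f) (g α) D := by
  simp only [specialize, coe_eval₂RingHom, ← coe_mapRingHom, hom_eval₂, mapRingHom_comp]
  simp

theorem specialize_map (g : A →+* B) (f : B →+* O) (α : O) (D : A[X][X]) :
    specialize f α (D.map (mapRingHom g)) = specialize (f.comp g) α D := by
  rw [specialize, specialize, coe_eval₂RingHom, coe_eval₂RingHom, eval₂_map, mapRingHom_comp]

theorem specialize_map_C (f : A →+* O) (α : O) (p : A[X]) :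
    specialize f α (p.map C) = C (p.eval₂ f α) := by
  rw [specialize, coe_eval₂RingHom, eval₂_map, hom_eval₂]
  congr 1
  ext a
  simp

theorem specialize_C (f : A →+* O) (α : O) (R : A[X]) : specialize f α (C R) = R.map f := by
  simp [specialize]

theorem specialize_id (α : A) (D : A[X][X]) : specialize (RingHom.id A) α D = D.eval (C α) := by
  rw [specialize, coe_eval₂RingHom, mapRingHom_id, eval]

theorem coeff_specialize (f : A →+* O) (α : O) (D : A[X][X]) {n : ℕ} (hn : D.natDegree ≤ n)
    (j : ℕ) :
    (specialize f α D).coeff j = ∑ i ∈ Finset.range (n + 1), f ((D.coeff i).coeff j) * α ^ i := by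
  rw [specialize, coe_eval₂RingHom, eval₂_eq_sum_range' _ (Nat.lt_succ_of_le hn), finsetSum_coeff]
  refine Finset.sum_congr rfl fun i _ => ?_
  rw [← C_pow, coeff_mul_C, coe_mapRingHom, coeff_map]

theorem natDegree_specialize_le (f : A →+* O) (α : O) {D : A[X][X]} {n : ℕ}
    (hD : ∀ i, (D.coeff i).natDegree ≤ n) : (specialize f α D).natDegree ≤ n :=
  natDegree_le_iff_coeff_eq_zero.2 fun j hj => by
    rw [coeff_specialize f α D le_rfl]
    refine Finset.sum_eq_zero fun i _ => ?_
    rw [coeff_eq_zero_of_natDegree_lt ((hD i).trans_lt hj), map_zero, zero_mul]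

theorem exists_zmod_ringHom {q : ℕ} (h : (q : O) = 0) : Nonempty (ZMod q →+* O) := by
  obtain ⟨p, _⟩ := CharP.exists O
  exact ⟨ZMod.castHom ((CharP.cast_eq_zero_iff O p q).1 h) O⟩

theorem natCast_dvd_coeff_specialize {q : ℕ} {p : ℤ[X]} {D : ℤ[X][X]} {α : O}
    (hα : p.eval₂ (Int.castRingHom O) α = 0)
    (hD : (p.map (Int.castRingHom (ZMod q))).map C ∣ D.map (mapRingHom (Int.castRingHom (ZMod q))))
    (j : ℕ) : (q : O) ∣ (specialize (Int.castRingHom O) α D).coeff j := by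
  let π := Ideal.Quotient.mk (Ideal.span {(q : O)})
  have hq : (q : O ⧸ Ideal.span {(q : O)}) = 0 := by
    rw [← map_natCast π, Ideal.Quotient.eq_zero_iff_mem]
    exact Ideal.mem_span_singleton_self _
  obtain ⟨f⟩ := exists_zmod_ringHom hq
  have hzero : (specialize (Int.castRingHom O) α D).map π = 0 := by
    rw [map_specialize, Subsingleton.elim (π.comp (Int.castRingHom O)) (f.comp (Int.castRingHom _)),
      ← specialize_map, ← zero_dvd_iff]
    convert map_dvd (specialize f (π α)) hD
    rw [specialize_map_C, eval₂_map, Subsingleton.elim (f.comp (Int.castRingHom _))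
      (π.comp (Int.castRingHom O)), ← hom_eval₂, hα, map_zero, C_0]
  rw [← Ideal.mem_span_singleton, ← Ideal.Quotient.eq_zero_iff_mem, ← coeff_map, hzero, coeff_zero]

end Specialization

section SmallLifts

variable {A B : Type*} [CommRing A] [CommRing B]

/-- The polynomial obtained by applying `s` to the coefficients of `f`, for `s` with `s 0 = 0`. -/
noncomputable def mapCoeff (s : A → B) (f : A[X]) : B[X] :=
  ∑ i ∈ Finset.range (f.natDegree + 1), monomial i (s (f.coeff i))

theorem coeff_mapCoeff {s : A → B} (hs : s 0 = 0) (f : A[X]) (i : ℕ) :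
    (mapCoeff s f).coeff i = s (f.coeff i) := by
  simp only [mapCoeff, finsetSum_coeff, coeff_monomial, Finset.sum_ite_eq', Finset.mem_range]
  split_ifs with hi
  · rfl
  · rw [coeff_eq_zero_of_natDegree_lt (by omega), hs]

theorem natDegree_mapCoeff_le {s : A → B} (hs : s 0 = 0) (f : A[X]) :
    (mapCoeff s f).natDegree ≤ f.natDegree :=
  natDegree_le_iff_coeff_eq_zero.2 fun i hi => by
    rw [coeff_mapCoeff hs, coeff_eq_zero_of_natDegree_lt hi, hs]

theorem map_mapCoeff {s : A → B} (hs : s 0 = 0) {π : B →+* A} (hπ : ∀ a, π (s a) = a) (f : A[X]) :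
    (mapCoeff s f).map π = f := by
  ext i
  rw [coeff_map, coeff_mapCoeff hs, hπ]

variable {q : ℕ}

/-- The lift of a polynomial modulo `q` with coefficients in `(-q / 2, q / 2]`. -/
noncomputable def minAbsLift : (ZMod q)[X] → ℤ[X] := mapCoeff ZMod.valMinAbs

theorem minAbsLift_zero : minAbsLift (0 : (ZMod q)[X]) = 0 := by simp [minAbsLift, mapCoeff]

theorem coeff_minAbsLift (f : (ZMod q)[X]) (i : ℕ) :
    (minAbsLift f).coeff i = (f.coeff i).valMinAbs := coeff_mapCoeff (ZMod.valMinAbs_zero q) f i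

theorem map_minAbsLift (f : (ZMod q)[X]) : (minAbsLift f).map (Int.castRingHom (ZMod q)) = f :=
  map_mapCoeff (ZMod.valMinAbs_zero q) ZMod.coe_valMinAbs f

theorem monic_minAbsLift (hq : 1 < q) {f : (ZMod q)[X]} (hf : f.Monic) :
    (minAbsLift f).Monic := by
  refine monic_of_natDegree_le_of_coeff_eq_one f.natDegree
    (natDegree_mapCoeff_le (ZMod.valMinAbs_zero q) f) ?_
  rw [coeff_minAbsLift, hf.coeff_natDegree, ← Nat.cast_one,
    ZMod.valMinAbs_natCast_of_le_half ((Nat.le_div_iff_mul_le two_pos).2 (by omega)), Nat.cast_one]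

end SmallLifts

section NormBounds

variable {𝕜 : Type*} [NormedField 𝕜]

theorem norm_coeff_mul_le {f g : 𝕜[X]} {n : ℕ} {a b : ℝ} (hn : f.natDegree ≤ n)
    (hf : ∀ i, ‖f.coeff i‖ ≤ a) (hg : ∀ i, ‖g.coeff i‖ ≤ b) (j : ℕ) :
    ‖(f * g).coeff j‖ ≤ (n + 1) * (a * b) := by
  have ha : 0 ≤ a := (norm_nonneg _).trans (hf 0)
  have hab : 0 ≤ a * b := mul_nonneg ha ((norm_nonneg _).trans (hg 0))
  rw [as_sum_range' f (n + 1) (Nat.lt_succ_of_le hn), Finset.sum_mul, finsetSum_coeff]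
  refine (norm_sum_le_of_le _ fun i _ => ?_).trans_eq (b := ∑ _i ∈ Finset.range (n + 1), a * b) ?_
  · rw [← C_mul_X_pow_eq_monomial, mul_assoc, coeff_C_mul, coeff_X_pow_mul']
    split_ifs
    · exact (norm_mul _ _).trans_le (mul_le_mul (hf i) (hg _) (norm_nonneg _) ha)
    · simpa using hab
  · simp

theorem norm_coeff_specialize_le {T : ℤ[X][X]} {z : ℂ} {n b : ℕ} {r : ℝ} (hn : T.natDegree ≤ n)
    (hb : ∀ i ≤ n, ∀ j, ((T.coeff i).coeff j).natAbs ≤ b) (hr : 1 ≤ r) (hz : ‖z‖ ≤ r) (j : ℕ) :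
    ‖(specialize (Int.castRingHom ℂ) z T).coeff j‖ ≤ (n + 1) * (b * r ^ n) := by
  rw [coeff_specialize _ _ _ hn]
  refine (norm_sum_le_of_le _ fun i hi => ?_).trans_eq
    (b := ∑ _i ∈ Finset.range (n + 1), b * r ^ n) (by simp)
  have hin : i ≤ n := Nat.lt_succ_iff.1 (Finset.mem_range.1 hi)
  rw [norm_mul, norm_pow, eq_intCast, Complex.norm_intCast, ← Int.cast_abs, Int.abs_eq_natAbs,
    Int.cast_natCast]
  exact mul_le_mul (by exact_mod_cast hb i hin j)
    ((pow_le_pow_left₀ (norm_nonneg z) hz i).trans (pow_le_pow_right₀ hr hin))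
    (by positivity) (Nat.cast_nonneg b)

theorem norm_le_of_isRoot_of_sum_le {f : 𝕜[X]} (hf : f.Monic) {r : ℝ} (hr : 0 < r)
    (h : ∑ i ∈ Finset.range f.natDegree, ‖f.coeff i‖ * r ^ i ≤ r ^ f.natDegree) {z : 𝕜}
    (hz : f.IsRoot z) : ‖z‖ ≤ r := by
  obtain ⟨t, hzt⟩ : ∃ t, ‖z‖ = r * t := ⟨‖z‖ / r, (mul_div_cancel₀ _ hr.ne').symm⟩
  by_contra! hlt
  have ht : 1 < t := lt_of_mul_lt_mul_left (by rwa [mul_one, ← hzt]) hr.le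
  obtain ⟨n, hn⟩ : ∃ n, f.natDegree = n + 1 := by
    refine Nat.exists_eq_succ_of_ne_zero fun h0 => ?_
    rw [eq_one_of_monic_natDegree_zero hf h0, IsRoot, eval_one] at hz
    exact one_ne_zero hz
  have hterm (i : ℕ) (hi : i ∈ Finset.range (n + 1)) :
      ‖f.coeff i * z ^ i‖ ≤ ‖f.coeff i‖ * r ^ i * t ^ n := by
    rw [norm_mul, norm_pow, hzt, mul_pow, ← mul_assoc]
    exact mul_le_mul_of_nonneg_left (pow_le_pow_right₀ ht.le (Finset.mem_range_succ_iff.1 hi))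
      (by positivity)
  have hroot : z ^ (n + 1) = -∑ i ∈ Finset.range (n + 1), f.coeff i * z ^ i := by
    rw [IsRoot, eval_eq_sum_range, Finset.sum_range_succ, hf.coeff_natDegree, one_mul, hn] at hz
    exact (neg_eq_of_add_eq_zero_right hz).symm
  have hle : r ^ (n + 1) * t ^ (n + 1) ≤ r ^ (n + 1) * t ^ n :=
    calc r ^ (n + 1) * t ^ (n + 1) = ‖z ^ (n + 1)‖ := by rw [norm_pow, hzt, mul_pow]
      _ ≤ ∑ i ∈ Finset.range (n + 1), ‖f.coeff i‖ * r ^ i * t ^ n := by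
          rw [hroot, norm_neg]
          exact norm_sum_le_of_le _ hterm
      _ ≤ r ^ (n + 1) * t ^ n := by
          rw [← Finset.sum_mul, ← hn]
          gcongr
  exact (pow_lt_pow_right₀ ht n.lt_succ_self).not_ge (le_of_mul_le_mul_left hle (by positivity))

end NormBounds

section IntegersDivisibility

open NumberField

theorem eq_zero_of_natCast_dvd_of_norm_lt {L : Type*} [Field L] [NumberField L] {q : ℕ} {x : 𝓞 L}
    (hdvd : (q : 𝓞 L) ∣ x) (hlt : ∀ σ : L →+* ℂ, ‖σ x‖ < q) : x = 0 := by
  obtain ⟨y, rfl⟩ := hdvd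
  by_contra hne
  have hy (w : InfinitePlace L) : w y < 1 := by
    have hw := hlt w.embedding
    simp only [map_mul, norm_mul, map_natCast, Complex.norm_natCast] at hw
    have := lt_of_mul_lt_mul_left (hw.trans_eq (mul_one _).symm) (Nat.cast_nonneg q)
    rwa [InfinitePlace.norm_embedding_eq] at this
  obtain ⟨w⟩ : Nonempty (InfinitePlace L) := inferInstance
  exact (hy w).not_ge (InfinitePlace.one_le_of_lt_one (right_ne_zero_of_mul hne) fun v _ => hy v)

end IntegersDivisibility

section IncidencePolynomials

open NumberField

/-- A polynomial over the integers whose value at a root of `P` and a root of `intResolvent` detects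
the incidence of a point and a block, if `s` is true, or their non-incidence, if `s` is false. It
lifts the interpolant of the block polynomials from `ZMod rootModulus`. -/
noncomputable def incidencePoly (s : Bool) : ℤ[X][X] :=
  mapCoeff minAbsLift (interpolant (intP.map (Int.castRingHom (ZMod rootModulus)))
    (fun x => (liftedRoot x : ZMod rootModulus))
    (blockPoly blocks (fun x => (liftedRoot x : ZMod rootModulus)) s))

/-- The integral lift of the block resolvent of `P`. -/
noncomputable def intResolvent : ℤ[X] :=
  minAbsLift (blockResolvent blocks fun x => (liftedRoot x : ZMod rootModulus))

/-- The polynomial expressing that the two incidence polynomials multiply to the resolvent, up to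
the square of the derivative of `P`. It vanishes modulo `P` and `rootModulus`, and turns out to
vanish modulo `P`. -/
noncomputable def incidenceDefect : ℤ[X][X] :=
  incidencePoly true * incidencePoly false - intP.derivative.map C ^ 2 * C intResolvent

theorem map_incidencePoly (s : Bool) :
    (incidencePoly s).map (mapRingHom (Int.castRingHom (ZMod rootModulus))) =
      interpolant (intP.map (Int.castRingHom (ZMod rootModulus)))
        (fun x => (liftedRoot x : ZMod rootModulus))
        (blockPoly blocks (fun x => (liftedRoot x : ZMod rootModulus)) s) :=
  map_mapCoeff minAbsLift_zero map_minAbsLift _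

theorem map_intResolvent : intResolvent.map (Int.castRingHom (ZMod rootModulus)) =
    blockResolvent blocks fun x => (liftedRoot x : ZMod rootModulus) :=
  map_minAbsLift _

theorem monic_intResolvent : intResolvent.Monic :=
  monic_minAbsLift Fact.out (monic_prod_X_sub_C _ _)

theorem map_C_dvd_map_incidenceDefect :
    (intP.map (Int.castRingHom (ZMod rootModulus))).map C ∣
      incidenceDefect.map (mapRingHom (Int.castRingHom (ZMod rootModulus))) := by
  have hderiv : (intP.derivative.map C).map (mapRingHom (Int.castRingHom (ZMod rootModulus))) =
      (intP.map (Int.castRingHom (ZMod rootModulus))).derivative.map C := by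
    rw [derivative_map, Polynomial.map_map, Polynomial.map_map, mapRingHom_comp_C]
  rw [incidenceDefect, Polynomial.map_sub, Polynomial.map_mul, Polynomial.map_mul,
    Polynomial.map_pow, map_incidencePoly, map_incidencePoly, hderiv, map_C, coe_mapRingHom,
    map_intResolvent]
  refine map_C_dvd_interpolant_mul_sub isRoot_liftedRoot isUnit_liftedRoot_sub (monic_intP.map _)
    ?_ blocks
  rw [monic_intP.natDegree_map, natDegree_intP, Fintype.card_fin]

theorem natDegree_incidencePoly_le (s : Bool) : (incidencePoly s).natDegree ≤ 32 :=
  (natDegree_mapCoeff_le minAbsLift_zero _).trans <| (natDegree_interpolant_le _ _ _).trans <|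
    natDegree_map_le.trans natDegree_intP_le

theorem natDegree_coeff_incidencePoly_le (s : Bool) (i : ℕ) :
    ((incidencePoly s).coeff i).natDegree ≤ 2 ^ 9 := by
  rw [incidencePoly, coeff_mapCoeff minAbsLift_zero]
  refine (natDegree_mapCoeff_le (ZMod.valMinAbs_zero _) _).trans <|
    natDegree_coeff_interpolant_le _ _ (fun x => (natDegree_blockPoly_le _ _ _ _).trans ?_) i
  exact (List.toFinset_card_le _).trans ((List.length_map _).trans_le length_blockMasks_le)

theorem norm_le_six_of_isRoot {z : ℂ} (hz : intP.eval₂ (Int.castRingHom ℂ) z = 0) : ‖z‖ ≤ 6 := by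
  have hsum : ∑ i ∈ Finset.range 32, (coeffsP.getD i 0).natAbs * 6 ^ i ≤ 6 ^ 32 := by
    decide +kernel
  refine norm_le_of_isRoot_of_sum_le (monic_intP.map (Int.castRingHom ℂ)) (by norm_num) ?_
    (by rwa [IsRoot, eval_map])
  rw [monic_intP.natDegree_map, natDegree_intP]
  simp only [coeff_map, coeff_intP, eq_intCast, Complex.norm_intCast, ← Int.cast_abs,
    Int.abs_eq_natAbs, Int.cast_natCast]
  exact_mod_cast hsum

theorem norm_coeff_incidencePoly_le {z : ℂ} (hz : ‖z‖ ≤ 6) {s : Bool} {b : ℕ}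
    (h : smallInterpolant s b = true) (j : ℕ) :
    ‖(specialize (Int.castRingHom ℂ) z (incidencePoly s)).coeff j‖ ≤ 33 * (b * 6 ^ 32) := by
  refine (norm_coeff_specialize_le (b := b) (natDegree_incidencePoly_le s) (fun i hi j => ?_)
    (by norm_num) hz j).trans_eq (by norm_num)
  rw [incidencePoly, coeff_mapCoeff minAbsLift_zero, coeff_minAbsLift]
  exact natAbs_coeff_interpolant_le h hi j

theorem norm_eval_derivative_intP_le {z : ℂ} (hz : ‖z‖ ≤ 6) :
    ‖intP.derivative.eval₂ (Int.castRingHom ℂ) z‖ ≤ 33 * (2 ^ 40 * 6 ^ 32) := by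
  have hcoeff : ∀ i ≤ 32, (coeffsP.getD (i + 1) 0 * (i + 1)).natAbs ≤ 2 ^ 40 := by decide
  have hdeg : (intP.derivative.map C).natDegree ≤ 32 :=
    natDegree_map_le.trans <| (natDegree_derivative_le _).trans <|
      (Nat.sub_le _ _).trans natDegree_intP_le
  have hle := norm_coeff_specialize_le (T := intP.derivative.map C) (b := 2 ^ 40) hdeg
    (fun i hi j => ?_) (by norm_num) hz 0
  · rw [specialize_map_C, coeff_C_zero] at hle
    exact hle.trans_eq (by norm_num)
  · rw [coeff_map, coeff_derivative, coeff_intP, coeff_C]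
    split_ifs
    · exact hcoeff i hi
    · exact Nat.zero_le _

theorem specialize_incidenceDefect {A : Type*} [CommRing A] (α : A) :
    specialize (Int.castRingHom A) α incidenceDefect =
      specialize (Int.castRingHom A) α (incidencePoly true) *
        specialize (Int.castRingHom A) α (incidencePoly false) -
      C (intP.derivative.eval₂ (Int.castRingHom A) α) ^ 2 *
        intResolvent.map (Int.castRingHom A) := by
  rw [incidenceDefect, map_sub, map_mul, map_mul, map_pow, specialize_map_C, specialize_C]

theorem norm_coeff_incidenceDefect_lt {z : ℂ} (hz : intP.eval₂ (Int.castRingHom ℂ) z = 0) (j : ℕ) :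
    ‖(specialize (Int.castRingHom ℂ) z incidenceDefect).coeff j‖ < rootModulus := by
  have hz6 := norm_le_six_of_isRoot hz
  have hres : ‖(intResolvent.map (Int.castRingHom ℂ)).coeff j‖ ≤ 2 ^ 1200 := by
    rw [coeff_map, eq_intCast, Complex.norm_intCast, ← Int.cast_abs, Int.abs_eq_natAbs,
      Int.cast_natCast, intResolvent, coeff_minAbsLift]
    exact_mod_cast natAbs_coeff_blockResolvent_le j
  have hdeg : (specialize (Int.castRingHom ℂ) z (incidencePoly true)).natDegree ≤ 2 ^ 9 :=
    natDegree_specialize_le _ _ (natDegree_coeff_incidencePoly_le true)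
  have hprod := norm_coeff_mul_le hdeg (norm_coeff_incidencePoly_le hz6 smallInterpolant_true)
    (norm_coeff_incidencePoly_le hz6 smallInterpolant_false) j
  have hbound : (2 ^ 9 + 1) * (33 * (2 ^ 532 * 6 ^ 32) * (33 * (2 ^ 811 * 6 ^ 32))) +
      (33 * (2 ^ 40 * 6 ^ 32)) ^ 2 * 2 ^ 1200 < rootModulus := by decide +kernel
  rw [specialize_incidenceDefect, coeff_sub, ← C_pow, coeff_C_mul]
  calc _ ≤ _ := norm_sub_le _ _
    _ ≤ ((2 ^ 9 : ℕ) + 1) * (33 * ((2 ^ 532 : ℕ) * 6 ^ 32) * (33 * ((2 ^ 811 : ℕ) * 6 ^ 32))) +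
        (33 * (2 ^ 40 * 6 ^ 32)) ^ 2 * 2 ^ 1200 := by
      rw [norm_mul, norm_pow]
      exact add_le_add hprod (mul_le_mul (pow_le_pow_left₀ (norm_nonneg _)
        (norm_eval_derivative_intP_le hz6) 2) hres (norm_nonneg _) (by positivity))
    _ < rootModulus := by exact_mod_cast hbound

theorem specialize_incidencePoly_mul {L : Type*} [Field L] [NumberField L] {α : 𝓞 L}
    (hα : intP.eval₂ (Int.castRingHom (𝓞 L)) α = 0) :
    specialize (Int.castRingHom (𝓞 L)) α (incidencePoly true) *
        specialize (Int.castRingHom (𝓞 L)) α (incidencePoly false) =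
      C (intP.derivative.eval₂ (Int.castRingHom (𝓞 L)) α) ^ 2 *
        intResolvent.map (Int.castRingHom (𝓞 L)) := by
  rw [← sub_eq_zero, ← specialize_incidenceDefect]
  ext1 j
  refine eq_zero_of_natCast_dvd_of_norm_lt
    (natCast_dvd_coeff_specialize hα map_C_dvd_map_incidenceDefect j) fun σ => ?_
  let g : 𝓞 L →+* ℂ := σ.comp (algebraMap (𝓞 L) L)
  have hg : g.comp (Int.castRingHom (𝓞 L)) = Int.castRingHom ℂ := Subsingleton.elim _ _
  change ‖g _‖ < _
  rw [← coeff_map, map_specialize, hg]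
  exact norm_coeff_incidenceDefect_lt (by rw [← hg, ← hom_eval₂, hα, map_zero]) j

end IncidencePolynomials

section Splitting

open NumberField

theorem exists_isRoot_of_isRoot_map {A B : Type*} [CommRing A] [IsDomain A] [CommRing B]
    [IsDomain B] {f : A[X]} (hf : f.Splits) {φ : A →+* B} (hφ : f.map φ ≠ 0) {c : B}
    (hc : (f.map φ).IsRoot c) :
    ∃ a, f.IsRoot a ∧ φ a = c := by
  rw [← mem_roots hφ, hf.roots_map_of_ne_zero hφ, Multiset.mem_map] at hc
  obtain ⟨a, ha, rfl⟩ := hc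
  exact ⟨a, isRoot_of_mem_roots ha, rfl⟩

theorem splits_map_ringOfIntegers {L : Type*} [Field L] [NumberField L] {f : ℤ[X]} (hf : f.Monic)
    (hsplit : (f.map (Int.castRingHom L)).Splits) :
    (f.map (Int.castRingHom (𝓞 L))).Splits := by
  have hmap : (f.map (Int.castRingHom (𝓞 L))).map (algebraMap (𝓞 L) L) =
      f.map (Int.castRingHom L) := by
    rw [Polynomial.map_map, RingHom.eq_intCast' (RingHom.comp _ _)]
  refine Splits.of_splits_map_of_injective (RingOfIntegers.coe_injective (K := L))
    (hmap ▸ hsplit) fun a ha => ?_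
  refine (IsIntegralClosure.isIntegral_iff (R := ℤ) (A := 𝓞 L)).1 ⟨f, hf, ?_⟩
  have := isRoot_of_mem_roots ha
  rwa [hmap, IsRoot.def, eval_map] at this

variable {A ι : Type*} [CommRing A] [IsDomain A] [Fintype ι] {f : A[X]} {a : ι → A}

theorem roots_eq_map_of_injective (hdeg : f.natDegree ≤ Fintype.card ι) (hf : f ≠ 0)
    (ha : Function.Injective a) (hroot : ∀ x, f.IsRoot (a x)) :
    f.roots = Finset.univ.val.map a := by
  refine (Multiset.eq_of_le_of_card_le ?_ ?_).symm
  · rw [Multiset.le_iff_subset (Finset.univ.nodup.map ha)]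
    intro c hc
    obtain ⟨x, -, rfl⟩ := Multiset.mem_map.1 hc
    exact (mem_roots hf).2 (hroot x)
  · rw [Multiset.card_map]
    exact f.card_roots'.trans hdeg

theorem eq_prod_X_sub_C_of_injective (hdeg : f.natDegree = Fintype.card ι) (hf : f.Monic)
    (ha : Function.Injective a) (hroot : ∀ x, f.IsRoot (a x)) :
    f = ∏ x, (X - C (a x)) := by
  have hroots := roots_eq_map_of_injective hdeg.le hf.ne_zero ha hroot
  rw [← prod_multiset_X_sub_C_of_monic_of_roots_card_eq hf (by
    rw [hroots, Multiset.card_map]; exact hdeg.symm), hroots, Multiset.map_map]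
  rfl

end Splitting

universe u

section Frobenius

open NumberField

theorem exists_isMaximal_under_eq_span (L : Type*) [Field L] [NumberField L] (ℓ : ℕ)
    [hℓ : Fact ℓ.Prime] :
    ∃ Q : Ideal (𝓞 L), Q.IsMaximal ∧ Q.under ℤ = Ideal.span {(ℓ : ℤ)} ∧ CharP (𝓞 L ⧸ Q) ℓ := by
  have : (Ideal.span {(ℓ : ℤ)}).IsMaximal :=
    PrincipalIdealRing.isMaximal_of_irreducible (Nat.prime_iff_prime_int.1 hℓ.out).irreducible
  obtain ⟨Q, hQ, hover⟩ :=
    Ideal.exists_maximal_ideal_liesOver_of_isIntegral (S := 𝓞 L) (Ideal.span {(ℓ : ℤ)})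
  have hmem : (ℓ : ℤ) ∈ Q.under ℤ := hover.over ▸ Ideal.mem_span_singleton_self _
  rw [Ideal.mem_comap, ← Ideal.Quotient.eq_zero_iff_mem, map_natCast, map_natCast] at hmem
  have := Ideal.Quotient.nontrivial_iff.2 hQ.ne_top
  exact ⟨Q, hQ, hover.over.symm, (CharP.charP_iff_prime_eq_zero hℓ.out).2 hmem⟩

attribute [local instance] Ideal.Quotient.field in
theorem exists_frobenius (L : Type u) [Field L] [NumberField L] [IsGalois ℚ L] (ℓ : ℕ)
    [Fact ℓ.Prime] :
    ∃ (κ : Type u) (_ : Field κ) (_ : CharP κ ℓ) (ψ : 𝓞 L →+* κ) (σ : L ≃ₐ[ℚ] L),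
      ∀ b, ψ (σ • b) = ψ b ^ ℓ := by
  obtain ⟨Q, hQ, hunder, hchar⟩ := exists_isMaximal_under_eq_span L ℓ
  have : Algebra.IsInvariant ℤ (𝓞 L) (L ≃ₐ[ℚ] L) := inferInstance
  obtain ⟨σ, hσ⟩ := IsArithFrobAt.exists_of_isInvariant ℤ (L ≃ₐ[ℚ] L) Q
  refine ⟨𝓞 L ⧸ Q, inferInstance, hchar, Ideal.Quotient.mk Q, σ, fun b => ?_⟩
  have hcard : Nat.card (ℤ ⧸ Q.under ℤ) = ℓ := by
    rw [hunder, Nat.card_congr (Int.quotientSpanNatEquivZMod ℓ).toEquiv, Nat.card_zmod]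
  exact (AlgHom.IsArithFrobAt.mk_apply hσ b).trans (by rw [hcard])

end Frobenius

section RootReduction

variable (κ : Type*) [Field κ] [CharP κ 735389]

/-- The roots of `P` in a field of characteristic `735389`, labelled by `Fin 32`. -/
def residueRoot (x : Fin 32) : κ := rootSeed x

theorem exists_ringHom_liftedRoot :
    ∃ f : ZMod rootModulus →+* κ, ∀ x, f (liftedRoot x : ZMod rootModulus) = residueRoot κ x := by
  have hq : (rootModulus : κ) = 0 := by
    rw [rootModulus, Nat.cast_pow, CharP.cast_eq_zero, zero_pow (by decide)]
  obtain ⟨f⟩ := exists_zmod_ringHom hq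
  refine ⟨f, fun x => ?_⟩
  rw [map_natCast, residueRoot, CharP.natCast_eq_natCast κ 735389, ← liftedRoot_mod]
  exact (Nat.mod_modEq _ _).symm

theorem residueRoot_injective : Function.Injective (residueRoot κ) := by
  obtain ⟨f, hf⟩ := exists_ringHom_liftedRoot κ
  intro x y hxy
  by_contra hne
  refine ((isUnit_liftedRoot_sub hne).map f).ne_zero ?_
  rw [map_sub, hf, hf, hxy, sub_self]

theorem injOn_sum_residueRoot : Set.InjOn (fun B => ∑ i ∈ B, residueRoot κ i) blocks := by
  intro B hB B' hB' hsum
  rw [Finset.mem_coe, blocks, List.mem_toFinset, List.mem_map] at hB hB'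
  obtain ⟨m, hm, rfl⟩ := hB
  obtain ⟨m', hm', rfl⟩ := hB'
  simp only [residueRoot, ← Nat.cast_sum] at hsum
  rw [← maskSum_ofFn, ← maskSum_ofFn, CharP.natCast_eq_natCast κ 735389] at hsum
  rw [List.inj_on_of_nodup_map nodup_maskSum_rootSeed hm hm' hsum]

theorem isRoot_residueRoot (x : Fin 32) :
    (intP.map (Int.castRingHom κ)).IsRoot (residueRoot κ x) := by
  obtain ⟨f, hf⟩ := exists_ringHom_liftedRoot κ
  have := (isRoot_liftedRoot x).map (f := f)
  rwa [Polynomial.map_map, RingHom.eq_intCast' (f.comp _), hf] at this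

theorem map_intP_eq_prod_residueRoot :
    intP.map (Int.castRingHom κ) = ∏ x, (X - C (residueRoot κ x)) :=
  eq_prod_X_sub_C_of_injective
    ((monic_intP.natDegree_map _).trans (natDegree_intP.trans (Fintype.card_fin 32).symm))
    (monic_intP.map _) (residueRoot_injective κ) (isRoot_residueRoot κ)

theorem eval_derivative_residueRoot_ne_zero (x : Fin 32) :
    (intP.map (Int.castRingHom κ)).derivative.eval (residueRoot κ x) ≠ 0 := by
  have hsep : (intP.map (Int.castRingHom κ)).Separable := by
    rw [map_intP_eq_prod_residueRoot, separable_prod_X_sub_C_iff]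
    exact residueRoot_injective κ
  exact hsep.eval₂_derivative_ne_zero (RingHom.id κ) (by
    rw [eval₂_id]; exact isRoot_residueRoot κ x)

theorem map_intResolvent_residue :
    intResolvent.map (Int.castRingHom κ) = blockResolvent blocks (residueRoot κ) := by
  obtain ⟨f, hf⟩ := exists_ringHom_liftedRoot κ
  have hcomp : f ∘ (fun x => (liftedRoot x : ZMod rootModulus)) = residueRoot κ := funext hf
  rw [← hcomp, ← map_blockResolvent, ← map_intResolvent, Polynomial.map_map,
    RingHom.eq_intCast' (f.comp _)]

theorem specialize_incidencePoly_residueRoot (s : Bool) (x : Fin 32) :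
    specialize (Int.castRingHom κ) (residueRoot κ x) (incidencePoly s) =
      C ((intP.map (Int.castRingHom κ)).derivative.eval (residueRoot κ x)) *
        blockPoly blocks (residueRoot κ) s x := by
  obtain ⟨f, hf⟩ := exists_ringHom_liftedRoot κ
  have hint : f.comp (Int.castRingHom (ZMod rootModulus)) = Int.castRingHom κ :=
    RingHom.eq_intCast' _
  have hcomp : f ∘ (fun x => (liftedRoot x : ZMod rootModulus)) = residueRoot κ := funext hf
  have hspec : specialize (Int.castRingHom κ) (residueRoot κ x) (incidencePoly s) =
      ((interpolant (intP.map (Int.castRingHom (ZMod rootModulus)))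
        (fun x => (liftedRoot x : ZMod rootModulus))
        (blockPoly blocks (fun x => (liftedRoot x : ZMod rootModulus)) s)).eval
          (C (liftedRoot x : ZMod rootModulus))).map f := by
    rw [← map_incidencePoly, ← specialize_id, map_specialize, RingHom.comp_id, specialize_map,
      hint, hf]
  have hderiv : f ((intP.map (Int.castRingHom (ZMod rootModulus))).derivative.eval
      (liftedRoot x : ZMod rootModulus)) =
      (intP.map (Int.castRingHom κ)).derivative.eval (residueRoot κ x) := by
    rw [← eval₂_hom, ← eval_map, ← derivative_map, Polynomial.map_map, hint, hf]
  have hblock := map_blockPoly f blocks (fun x => (liftedRoot x : ZMod rootModulus)) s x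
  rw [hcomp] at hblock
  rw [hspec, eval_interpolant isRoot_liftedRoot isUnit_liftedRoot_sub, Polynomial.map_mul, map_C,
    hderiv, hblock]

end RootReduction

section RootLifting

variable {A κ : Type*} [CommRing A] [IsDomain A] [Field κ] [CharP κ 735389] (φ : A →+* κ)
  {γ : A} {B : Finset (Fin 32)}

theorem exists_isRoot_of_residueRoot (hsplit : (intP.map (Int.castRingHom A)).Splits)
    (x : Fin 32) : ∃ α, (intP.map (Int.castRingHom A)).IsRoot α ∧ φ α = residueRoot κ x := by
  refine exists_isRoot_of_isRoot_map hsplit ((monic_intP.map _).map φ).ne_zero ?_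
  rw [Polynomial.map_map, RingHom.eq_intCast' (φ.comp _)]
  exact isRoot_residueRoot κ x

theorem exists_isRoot_of_mem_blocks (hsplit : (intResolvent.map (Int.castRingHom A)).Splits)
    (hB : B ∈ blocks) :
    ∃ γ, (intResolvent.map (Int.castRingHom A)).IsRoot γ ∧ φ γ = ∑ i ∈ B, residueRoot κ i := by
  refine exists_isRoot_of_isRoot_map hsplit ((monic_intResolvent.map _).map φ).ne_zero ?_
  rw [Polynomial.map_map, RingHom.eq_intCast' (φ.comp _), map_intResolvent_residue,
    isRoot_blockResolvent_iff]
  exact ⟨B, hB, rfl⟩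

omit [IsDomain A] in
theorem exists_mem_blocks_of_isRoot (hγ : (intResolvent.map (Int.castRingHom A)).IsRoot γ) :
    ∃ B ∈ blocks, φ γ = ∑ i ∈ B, residueRoot κ i := by
  have hroot := hγ.map (f := φ)
  rwa [Polynomial.map_map, RingHom.eq_intCast' (φ.comp _), map_intResolvent_residue,
    isRoot_blockResolvent_iff] at hroot

end RootLifting

theorem isRoot_specialize_apply_iff {O : Type*} [CommRing O] (σ : O ≃+* O) (T : ℤ[X][X])
    (α γ : O) :
    (specialize (Int.castRingHom O) (σ α) T).IsRoot (σ γ) ↔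
      (specialize (Int.castRingHom O) α T).IsRoot γ := by
  have hmap : specialize (Int.castRingHom O) (σ α) T =
      (specialize (Int.castRingHom O) α T).map (σ : O →+* O) := by
    rw [map_specialize, RingHom.eq_intCast' (RingHom.comp _ _)]; rfl
  rw [hmap]
  exact isRoot_map_iff (f := (σ : O →+* O)) σ.injective

section Incidence

open NumberField
open scoped Pointwise

variable {L κ : Type*} [Field L] [NumberField L] [Field κ] [CharP κ 735389] {φ : 𝓞 L →+* κ}

theorem isRoot_specialize_incidencePoly_iff {α γ : 𝓞 L} {x : Fin 32} {B : Finset (Fin 32)}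
    (hα : (intP.map (Int.castRingHom (𝓞 L))).IsRoot α) (hφα : φ α = residueRoot κ x)
    (hγ : (intResolvent.map (Int.castRingHom (𝓞 L))).IsRoot γ)
    (hB : B ∈ blocks) (hφγ : φ γ = ∑ i ∈ B, residueRoot κ i) :
    (specialize (Int.castRingHom (𝓞 L)) α (incidencePoly true)).IsRoot γ ↔ x ∈ B := by
  have hred {s : Bool} (h : (specialize (Int.castRingHom (𝓞 L)) α (incidencePoly s)).IsRoot γ) :
      decide (x ∈ B) = s := by
    have hroot := h.map (f := φ)
    rw [map_specialize, hφα, RingHom.eq_intCast' (φ.comp _), specialize_incidencePoly_residueRoot,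
      hφγ, IsRoot.def, eval_mul, eval_C, mul_eq_zero] at hroot
    exact (isRoot_blockPoly_iff (injOn_sum_residueRoot κ) hB).1
      (hroot.resolve_left (eval_derivative_residueRoot_ne_zero κ x))
  refine ⟨fun h => of_decide_eq_true (hred h), fun hx => by_contra fun hne => ?_⟩
  have hmul := congrArg (eval γ) (specialize_incidencePoly_mul ((eval_map _ _).symm.trans hα))
  rw [eval_mul, eval_mul, hγ.eq_zero, mul_zero, mul_eq_zero] at hmul
  exact of_decide_eq_false (hred (hmul.resolve_left hne)) hx

theorem mem_stabilizer_blocks_of_apply_root {α : Fin 32 → 𝓞 L}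
    (hα : ∀ x, (intP.map (Int.castRingHom (𝓞 L))).IsRoot (α x))
    (hφα : ∀ x, φ (α x) = residueRoot κ x)
    (hsplit : (intResolvent.map (Int.castRingHom (𝓞 L))).Splits) (σ : 𝓞 L ≃+* 𝓞 L)
    {π : Equiv.Perm (Fin 32)} (hπ : ∀ x, σ (α x) = α (π x)) :
    π ∈ MulAction.stabilizer (Equiv.Perm (Fin 32)) blocks := by
  rw [MulAction.mem_stabilizer_finset']
  intro B hB
  obtain ⟨γ, hγ, hφγ⟩ := exists_isRoot_of_mem_blocks φ hsplit hB
  have hσγ : (intResolvent.map (Int.castRingHom (𝓞 L))).IsRoot (σ γ) := by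
    have := hγ.map (f := (σ : 𝓞 L →+* 𝓞 L))
    rwa [Polynomial.map_map, RingHom.eq_intCast' (RingHom.comp _ _)] at this
  obtain ⟨B', hB', hφσγ⟩ := exists_mem_blocks_of_isRoot φ hσγ
  have hmem (x : Fin 32) : π x ∈ B' ↔ x ∈ B := by
    rw [← isRoot_specialize_incidencePoly_iff (hα (π x)) (hφα (π x)) hσγ hB' hφσγ, ← hπ,
      isRoot_specialize_apply_iff,
      isRoot_specialize_incidencePoly_iff (hα x) (hφα x) hγ hB hφγ]
  convert hB'
  ext y
  obtain ⟨x, rfl⟩ := π.surjective y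
  rw [hmem]
  exact Finset.smul_mem_smul_finset_iff π

end Incidence

section FrobeniusCycles

variable {ℓ : ℕ} [Fact ℓ.Prime] {κ : Type*} [Field κ] [Algebra (ZMod ℓ) κ]

theorem pow_char_eq_self_iff {y : κ} : y ^ ℓ = y ↔ ∃ c, algebraMap (ZMod ℓ) κ c = y := by
  have := charP_of_injective_algebraMap (algebraMap (ZMod ℓ) κ).injective ℓ
  rw [← Subfield.mem_bot_iff_pow_eq_self, mem_bot_iff_intCast ℓ, ZMod.intCast_surjective.exists]
  simp only [map_intCast]

theorem aeval_pow_char (g : (ZMod ℓ)[X]) (y : κ) : aeval (y ^ ℓ) g = aeval y g ^ ℓ := by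
  rw [← expand_aeval, ZMod.expand_card, map_pow]

variable {Ω : Type*} {β : Ω → κ} {π : Equiv.Perm Ω} {f g : (ZMod ℓ)[X]}

theorem exists_isRoot_of_apply_eq (hπ : ∀ x, β (π x) = β x ^ ℓ) {x : Ω} (hx : π x = x)
    (hroot : aeval (β x) f = 0) : ∃ c, f.IsRoot c := by
  obtain ⟨c, hc⟩ := pow_char_eq_self_iff.1 ((hπ x).symm.trans (congrArg β hx))
  rw [← hc, aeval_algebraMap_eq_zero_iff] at hroot
  exact ⟨c, hroot⟩

variable [Fintype Ω]

theorem aeval_eq_zero_of_map_eq_prod (hβ : f.map (algebraMap (ZMod ℓ) κ) = ∏ x, (X - C (β x)))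
    (x : Ω) : aeval (β x) f = 0 := by
  rw [aeval_def, ← eval_map, hβ, eval_prod]
  exact Finset.prod_eq_zero (Finset.mem_univ x) (by rw [eval_sub, eval_X, eval_C, sub_self])

theorem apply_ne_of_forall_not_isRoot
    (hβ : f.map (algebraMap (ZMod ℓ) κ) = ∏ x, (X - C (β x)))
    (hπ : ∀ x, β (π x) = β x ^ ℓ) (hf : ∀ c, ¬f.IsRoot c) (x : Ω) : π x ≠ x := fun hx =>
  (exists_isRoot_of_apply_eq hπ hx (aeval_eq_zero_of_map_eq_prod hβ x)).elim hf

theorem exists_eq_of_aeval_eq_zero (hβ : f.map (algebraMap (ZMod ℓ) κ) = ∏ x, (X - C (β x)))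
    {y : κ} (hy : aeval y f = 0) : ∃ x, β x = y := by
  rw [aeval_def, ← eval_map, ← IsRoot.def, hβ, isRoot_prod] at hy
  obtain ⟨x, -, hx⟩ := hy
  exact ⟨x, root_X_sub_C.1 hx⟩

theorem injective_of_separable (hβ : f.map (algebraMap (ZMod ℓ) κ) = ∏ x, (X - C (β x)))
    (hsep : f.Separable) : Function.Injective β :=
  separable_prod_X_sub_C_iff.1 (hβ ▸ hsep.map)

theorem card_filter_aeval_eq_zero [DecidableEq κ]
    (hβ : f.map (algebraMap (ZMod ℓ) κ) = ∏ x, (X - C (β x))) (hsep : f.Separable) (hgf : g ∣ f) :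
    (Finset.univ.filter fun x => aeval (β x) g = 0).card = g.natDegree := by
  have hsplits : (g.map (algebraMap (ZMod ℓ) κ)).Splits :=
    (hβ ▸ Splits.prod fun x _ => Splits.X_sub_C _ : (f.map _).Splits).of_dvd
      (map_ne_zero hsep.ne_zero) (Polynomial.map_dvd _ hgf)
  rw [← card_rootSet_eq_natDegree (hsep.of_dvd hgf) hsplits, ← Nat.card_eq_fintype_card,
    ← Set.ncard_coe_finset, ← Set.ncard_image_of_injective _ (injective_of_separable hβ hsep)]
  refine congrArg Set.ncard (Set.ext fun y => ?_)
  simp only [Set.mem_image, Finset.mem_coe, Finset.mem_filter, Finset.mem_univ, true_and,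
    mem_rootSet_of_ne (ne_zero_of_dvd_ne_zero hsep.ne_zero hgf)]
  refine ⟨fun ⟨_, hx, hxy⟩ => hxy ▸ hx, fun hy => ?_⟩
  obtain ⟨x, rfl⟩ := exists_eq_of_aeval_eq_zero hβ (aeval_eq_zero_of_dvd_aeval_eq_zero hgf hy)
  exact ⟨x, hy, rfl⟩

/-- The polynomial `f` is separable, has a root, and has a factor of degree `d` without roots.
Modulo a prime, this makes Frobenius fix a root and move each of `d` others. -/
def HasRootlessFactor {k : Type*} [Field k] (f : k[X]) (d : ℕ) : Prop :=
  f.Separable ∧ ∃ g h, f = g * h ∧ g.natDegree = d ∧ (∀ c, ¬g.IsRoot c) ∧ ∃ c, h.IsRoot c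

theorem HasRootlessFactor.fixesAndMoves {d : ℕ} (hf : HasRootlessFactor f d)
    (hβ : f.map (algebraMap (ZMod ℓ) κ) = ∏ x, (X - C (β x))) (hπ : ∀ x, β (π x) = β x ^ ℓ) :
    FixesAndMoves π d := by
  classical
  obtain ⟨hsep, g, h, rfl, rfl, hg, c, hc⟩ := hf
  have hc0 : aeval (algebraMap (ZMod ℓ) κ c) (g * h) = 0 := by
    rw [aeval_algebraMap_apply, coe_aeval_eq_eval, eval_mul, hc.eq_zero, mul_zero, map_zero]
  obtain ⟨x, hx⟩ := exists_eq_of_aeval_eq_zero hβ hc0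
  have hfix : β (π x) = β x := (hπ x).trans (pow_char_eq_self_iff.2 ⟨c, hx.symm⟩)
  refine ⟨x, injective_of_separable hβ hsep hfix, Finset.univ.filter fun y => aeval (β y) g = 0,
    card_filter_aeval_eq_zero hβ hsep (dvd_mul_right g h), fun y => ?_, fun y hy hfix => ?_⟩
  · simp only [Finset.mem_filter, Finset.mem_univ, true_and, hπ, aeval_pow_char,
      pow_eq_zero_iff (Fact.out : ℓ.Prime).ne_zero]
  · exact (exists_isRoot_of_apply_eq hπ hfix (Finset.mem_filter.1 hy).2).elim hg

end FrobeniusCycles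

section Factorizations

theorem separable_ofCoeffs {R : Type*} [CommRing R] {cs us vs : List R} {n : ℕ}
    (h : addCoeffs (mulCoeffs us cs) (mulCoeffs vs (derivCoeffs cs)) = 1 :: List.replicate n 0) :
    (ofCoeffs cs).Separable := by
  refine ⟨ofCoeffs us, ofCoeffs vs, ?_⟩
  rw [← ofCoeffs_derivCoeffs, ← ofCoeffs_mulCoeffs, ← ofCoeffs_mulCoeffs, ← ofCoeffs_addCoeffs, h,
    ofCoeffs_cons, ofCoeffs_replicate_zero, C_1, mul_zero, add_zero]

theorem map_intP (ℓ : ℕ) :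
    intP.map (Int.castRingHom (ZMod ℓ)) = ofCoeffs (coeffsP.map (Int.castRingHom (ZMod ℓ))) :=
  map_ofCoeffs _ _

/-- The arguments `us` and `vs` are Bézout coefficients of `P` and its derivative. -/
theorem hasRootlessFactor_of_coeffs {ℓ d n : ℕ} [Fact ℓ.Prime] {gs hs us vs : List (ZMod ℓ)}
    (hmul : mulCoeffs gs hs = coeffsP.map (Int.castRingHom (ZMod ℓ)))
    (hbezout : addCoeffs (mulCoeffs us (mulCoeffs gs hs))
      (mulCoeffs vs (derivCoeffs (mulCoeffs gs hs))) = 1 :: List.replicate n 0)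
    (hlength : gs.length - 1 = d) (hlead : gs.getD d 0 ≠ 0)
    (hgs : ∀ a, gs.foldr (fun c r => c + a * r) 0 ≠ 0)
    (hhs : ∃ a, hs.foldr (fun c r => c + a * r) 0 = 0) :
    HasRootlessFactor (intP.map (Int.castRingHom (ZMod ℓ))) d := by
  rw [map_intP, ← hmul]
  refine ⟨separable_ofCoeffs hbezout, ofCoeffs gs, ofCoeffs hs, ofCoeffs_mulCoeffs gs hs, ?_,
    fun a => ?_, hhs.imp fun a ha => ?_⟩
  · exact natDegree_eq_of_le_of_coeff_ne_zero (hlength ▸ natDegree_ofCoeffs_le gs)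
      (by rwa [coeff_ofCoeffs])
  · rw [IsRoot.def, eval_ofCoeffs]
    exact hgs a
  · rw [IsRoot.def, eval_ofCoeffs]
    exact ha

instance : Fact (Nat.Prime 103) := ⟨by norm_num⟩

instance : Fact (Nat.Prime 113) := ⟨by norm_num⟩

instance : Fact (Nat.Prime 139) := ⟨by norm_num⟩

instance : Fact (Nat.Prime 193) := ⟨by norm_num⟩

theorem not_isRoot_map_intP_three (c : ZMod 3) :
    ¬(intP.map (Int.castRingHom (ZMod 3))).IsRoot c := by
  rw [map_intP, IsRoot.def, eval_ofCoeffs]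
  decide +kernel +revert

theorem hasRootlessFactor_31 :
    HasRootlessFactor (intP.map (Int.castRingHom (ZMod 193))) 31 :=
  hasRootlessFactor_of_coeffs (n := 63)
    (gs := [58, 11, 30, 6, 136, 37, 54, 68, 86, 91, 143, 56, 131, 65, 153, 57, 20, 124, 91, 84,
      151, 16, 73, 21, 7, 165, 118, 111, 157, 105, 128, 1])
    (hs := [61, 1])
    (us := [0, 94, 60, 48, 156, 48, 30, 51, 52, 30, 82, 139, 72, 186, 3, 32, 171, 86, 93, 118, 41,
      143, 190, 90, 30, 29, 43, 171, 63, 138, 19])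
    (vs := [184, 47, 167, 67, 69, 137, 190, 69, 26, 184, 24, 14, 101, 92, 6, 68, 33, 130, 14, 16,
      122, 182, 165, 26, 38, 26, 134, 25, 81, 165, 90, 114])
    (by decide +kernel) (by decide +kernel) (by decide +kernel) (by decide +kernel)
    (by decide +kernel) (by decide +kernel)

theorem hasRootlessFactor_2 :
    HasRootlessFactor (intP.map (Int.castRingHom (ZMod 139))) 2 :=
  hasRootlessFactor_of_coeffs (n := 63)
    (gs := [133, 4, 1])
    (hs := [136, 79, 97, 96, 10, 60, 98, 14, 122, 127, 57, 21, 21, 93, 46, 96, 71, 65, 24, 55, 119,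
      109, 55, 107, 48, 52, 39, 78, 38, 131, 1])
    (us := [74, 37, 87, 61, 131, 94, 63, 94, 13, 125, 88, 52, 135, 8, 67, 111, 4, 29, 125, 34, 80,
      83, 52, 55, 101, 68, 7, 88, 32, 99, 82])
    (vs := [118, 45, 22, 98, 68, 63, 124, 39, 92, 113, 125, 28, 81, 82, 103, 18, 39, 44, 37, 38, 2,
      24, 34, 91, 93, 111, 97, 70, 107, 108, 7, 93])
    (by decide +kernel) (by decide +kernel) (by decide +kernel) (by decide +kernel)
    (by decide +kernel) (by decide +kernel)

theorem hasRootlessFactor_3 :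
    HasRootlessFactor (intP.map (Int.castRingHom (ZMod 113))) 3 :=
  hasRootlessFactor_of_coeffs (n := 63)
    (gs := [12, 57, 44, 1])
    (hs := [30, 81, 4, 99, 89, 99, 111, 67, 87, 54, 72, 46, 31, 6, 101, 75, 80, 9, 107, 1, 79, 12,
      16, 49, 24, 28, 105, 21, 65, 1])
    (us := [44, 88, 49, 20, 46, 39, 59, 96, 21, 105, 94, 48, 61, 15, 61, 23, 61, 8, 59, 39, 63, 86,
      106, 46, 65, 10, 75, 95, 70, 60, 59])
    (vs := [27, 33, 38, 108, 107, 110, 9, 12, 62, 44, 93, 41, 50, 60, 31, 90, 8, 5, 12, 10, 85, 79,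
      75, 65, 27, 80, 99, 108, 40, 79, 50, 37])
    (by decide +kernel) (by decide +kernel) (by decide +kernel) (by decide +kernel)
    (by decide +kernel) (by decide +kernel)

theorem hasRootlessFactor_5 :
    HasRootlessFactor (intP.map (Int.castRingHom (ZMod 103))) 5 :=
  hasRootlessFactor_of_coeffs (n := 63)
    (gs := [75, 81, 53, 52, 82, 1])
    (hs := [26, 54, 92, 16, 47, 76, 3, 19, 35, 66, 44, 82, 79, 15, 10, 9, 80, 31, 59, 23, 87, 45,
      48, 84, 9, 99, 17, 1])
    (us := [29, 45, 45, 39, 1, 13, 59, 97, 47, 33, 65, 55, 101, 19, 12, 21, 86, 8, 69, 68, 97, 51,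
      57, 84, 42, 86, 11, 99, 64, 79, 19])
    (vs := [43, 30, 15, 32, 64, 78, 12, 79, 59, 47, 59, 54, 13, 55, 14, 48, 38, 53, 89, 87, 72, 71,
      78, 11, 4, 61, 100, 51, 2, 25, 31, 67])
    (by decide +kernel) (by decide +kernel) (by decide +kernel) (by decide +kernel)
    (by decide +kernel) (by decide +kernel)

end Factorizations

section GaloisAction

open NumberField

theorem exists_galActionHom_of_eq_prod {F E ι : Type*} [Field F] [Field E] [Algebra F E]
    [Fintype ι] {f : F[X]} [hsplit : Fact (f.map (algebraMap F E)).Splits] {a : ι → E}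
    (ha : Function.Injective a) (hf : f.map (algebraMap F E) = ∏ x, (X - C (a x))) :
    ∃ ρ : f.Gal →* Equiv.Perm ι, Function.Injective ρ ∧
      ∀ (σ : E ≃ₐ[F] E) x, σ (a x) = a (ρ (Gal.restrict f E σ) x) := by
  have hrange : Set.range a = f.rootSet E := by
    ext y
    have hne : f ≠ 0 := by
      rintro rfl
      exact Finset.prod_ne_zero_iff.2 (fun x _ => X_sub_C_ne_zero (a x))
        (hf ▸ Polynomial.map_zero _)
    rw [mem_rootSet_of_ne hne, aeval_def, ← eval_map, ← IsRoot.def, hf, isRoot_prod]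
    simp only [Finset.mem_univ, true_and, root_X_sub_C, Set.mem_range]
  let e : ι ≃ f.rootSet E := (Equiv.ofInjective a ha).trans (Equiv.setCongr hrange)
  refine ⟨(Equiv.permCongrHom e.symm).toMonoidHom.comp (Gal.galActionHom f E),
    (Equiv.permCongrHom e.symm).injective.comp (Gal.galActionHom_injective f E), fun σ x => ?_⟩
  calc σ (a x) = Gal.galActionHom f E (Gal.restrict f E σ) (e x) :=
        (Gal.galActionHom_restrict f E σ (e x)).symm
    _ = e (e.symm (Gal.galActionHom f E (Gal.restrict f E σ) (e x))) := by
        rw [Equiv.apply_symm_apply]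
    _ = _ := rfl

theorem exists_isGalois_splits (f : ℚ[X]) :
    ∃ (L : Type) (_ : Field L) (_ : NumberField L), IsGalois ℚ L ∧
      (f.map (algebraMap ℚ L)).Splits := by
  have hsf : IsSplittingField ℚ f.SplittingField f := by
    convert @IsSplittingField.splittingField ℚ _ f
    exact Subsingleton.elim _ _
  have := Normal.of_isSplittingField (F := ℚ) (E := f.SplittingField) f
  exact ⟨f.SplittingField, inferInstance, {}, IsGalois.mk, IsSplittingField.splits _ f⟩

theorem exists_isGalois_splits_ringOfIntegers {f g : ℤ[X]} (hf : f.Monic) (hg : g.Monic) :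
    ∃ (L : Type) (_ : Field L) (_ : NumberField L), IsGalois ℚ L ∧
      (f.map (Int.castRingHom (𝓞 L))).Splits ∧ (g.map (Int.castRingHom (𝓞 L))).Splits := by
  obtain ⟨L, _, _, hgal, hL⟩ := exists_isGalois_splits ((f * g).map (Int.castRingHom ℚ))
  rw [Polynomial.map_map, RingHom.eq_intCast' (RingHom.comp _ _)] at hL
  have hsplit := splits_map_ringOfIntegers (hf.mul hg) hL
  have hne := ((hf.mul hg).map (Int.castRingHom (𝓞 L))).ne_zero
  exact ⟨L, inferInstance, inferInstance, hgal,
    hsplit.of_dvd hne (Polynomial.map_dvd _ (dvd_mul_right f g)),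
    hsplit.of_dvd hne (Polynomial.map_dvd _ (dvd_mul_left g f))⟩

end GaloisAction

section FrobeniusPermutations

open NumberField

variable {L : Type u} [Field L] [NumberField L] [IsGalois ℚ L] {ι : Type*} [Fintype ι] {f : ℤ[X]}
  {α : ι → 𝓞 L} {r : (L ≃ₐ[ℚ] L) → Equiv.Perm ι}

theorem exists_frobenius_apply_root (hα : f.map (Int.castRingHom (𝓞 L)) = ∏ x, (X - C (α x)))
    (hr : ∀ σ x, σ • α x = α (r σ x)) (ℓ : ℕ) [Fact ℓ.Prime] :
    ∃ (κ : Type u) (_ : Field κ) (_ : Algebra (ZMod ℓ) κ) (β : ι → κ) (σ : L ≃ₐ[ℚ] L),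
      (f.map (Int.castRingHom (ZMod ℓ))).map (algebraMap (ZMod ℓ) κ) = ∏ x, (X - C (β x)) ∧
        ∀ x, β (r σ x) = β x ^ ℓ := by
  obtain ⟨κ, _, _, ψ, σ, hσ⟩ := exists_frobenius L ℓ
  let := ZMod.algebra κ ℓ
  refine ⟨κ, inferInstance, inferInstance, ψ ∘ α, σ, ?_, fun x => ?_⟩
  · have hmap := congrArg (Polynomial.map ψ) hα
    rw [Polynomial.map_map, RingHom.eq_intCast' (ψ.comp _), Polynomial.map_prod] at hmap
    rw [Polynomial.map_map, RingHom.eq_intCast' (RingHom.comp _ _), hmap]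
    simp only [Polynomial.map_sub, map_X, map_C, Function.comp_apply]
  · rw [Function.comp_apply, ← hr, hσ, Function.comp_apply]

theorem exists_forall_apply_ne (hα : f.map (Int.castRingHom (𝓞 L)) = ∏ x, (X - C (α x)))
    (hr : ∀ σ x, σ • α x = α (r σ x)) {ℓ : ℕ} [Fact ℓ.Prime]
    (hf : ∀ c, ¬(f.map (Int.castRingHom (ZMod ℓ))).IsRoot c) : ∃ σ, ∀ x, r σ x ≠ x := by
  obtain ⟨κ, _, _, β, σ, hβ, hσ⟩ := exists_frobenius_apply_root hα hr ℓ
  exact ⟨σ, apply_ne_of_forall_not_isRoot hβ hσ hf⟩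

theorem exists_fixesAndMoves (hα : f.map (Int.castRingHom (𝓞 L)) = ∏ x, (X - C (α x)))
    (hr : ∀ σ x, σ • α x = α (r σ x)) {ℓ d : ℕ} [Fact ℓ.Prime]
    (hf : HasRootlessFactor (f.map (Int.castRingHom (ZMod ℓ))) d) :
    ∃ σ, FixesAndMoves (r σ) d := by
  obtain ⟨κ, _, _, β, σ, hβ, hσ⟩ := exists_frobenius_apply_root hα hr ℓ
  exact ⟨σ, hf.fixesAndMoves hβ hσ⟩

end FrobeniusPermutations

section GaloisGroup

open NumberField
open scoped Pointwise

theorem map_intP_rat : intP.map (Int.castRingHom ℚ) = P := by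
  rw [intP, map_ofCoeffs]
  simp only [P, coeffsP, List.map_cons, List.map_nil, ofCoeffs, List.foldr_cons, List.foldr_nil,
    eq_intCast]
  push_cast
  simp only [map_neg, map_ofNat, map_one, map_zero]
  ring

theorem exists_roots_residueRoot {L : Type u} [Field L] [NumberField L] [IsGalois ℚ L]
    (hsplit : (intP.map (Int.castRingHom (𝓞 L))).Splits) :
    ∃ (κ : Type u) (_ : Field κ) (_ : CharP κ 735389) (φ : 𝓞 L →+* κ) (α : Fin 32 → 𝓞 L),
      Function.Injective α ∧ intP.map (Int.castRingHom (𝓞 L)) = ∏ x, (X - C (α x)) ∧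
        ∀ x, φ (α x) = residueRoot κ x := by
  obtain ⟨κ, _, _, φ, -⟩ := exists_frobenius L 735389
  choose α hα hφα using exists_isRoot_of_residueRoot φ hsplit
  have hinj : Function.Injective α := fun x y hxy =>
    residueRoot_injective κ (by rw [← hφα, ← hφα, hxy])
  refine ⟨κ, inferInstance, inferInstance, φ, α, hinj, ?_, hφα⟩
  refine eq_prod_X_sub_C_of_injective ?_ (monic_intP.map _) hinj hα
  rw [monic_intP.natDegree_map, natDegree_intP, Fintype.card_fin]

theorem exists_injective_apply_root {L : Type u} [Field L] [NumberField L] [IsGalois ℚ L]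
    {α : Fin 32 → 𝓞 L} (hα : Function.Injective α)
    (hprod : intP.map (Int.castRingHom (𝓞 L)) = ∏ x, (X - C (α x))) :
    ∃ (ρ : P.Gal →* Equiv.Perm (Fin 32)) (res : (L ≃ₐ[ℚ] L) → P.Gal), Function.Injective ρ ∧
      Function.Surjective res ∧ ∀ (σ : L ≃ₐ[ℚ] L) x, σ • α x = α (ρ (res σ) x) := by
  have hP : P.map (algebraMap ℚ L) = ∏ x, (X - C (α x : L)) := by
    have hmap := congrArg (Polynomial.map (algebraMap (𝓞 L) L)) hprod
    rw [Polynomial.map_map, RingHom.eq_intCast' (RingHom.comp _ _), Polynomial.map_prod] at hmap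
    rw [← map_intP_rat, Polynomial.map_map, RingHom.eq_intCast' (RingHom.comp _ _), hmap]
    simp only [Polynomial.map_sub, map_X, map_C]
  have : Fact (P.map (algebraMap ℚ L)).Splits := ⟨hP ▸ Splits.prod fun x _ => Splits.X_sub_C _⟩
  obtain ⟨ρ, hρ, hρα⟩ :=
    exists_galActionHom_of_eq_prod (RingOfIntegers.coe_injective.comp hα) hP
  exact ⟨ρ, Gal.restrict P L, hρ, Gal.restrict_surjective P L, fun σ x =>
    RingOfIntegers.ext (hρα σ x)⟩

theorem range_eq_stabilizer_blocks {L G : Type*} [Field L] [NumberField L] [IsGalois ℚ L]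
    [Group G] {α : Fin 32 → 𝓞 L} {ρ : G →* Equiv.Perm (Fin 32)} {res : (L ≃ₐ[ℚ] L) → G}
    (hprod : intP.map (Int.castRingHom (𝓞 L)) = ∏ x, (X - C (α x)))
    (hρ : ∀ (σ : L ≃ₐ[ℚ] L) x, σ • α x = α (ρ (res σ) x))
    (hle : ρ.range ≤ MulAction.stabilizer (Equiv.Perm (Fin 32)) blocks) :
    ρ.range = MulAction.stabilizer (Equiv.Perm (Fin 32)) blocks := by
  obtain ⟨σ₀, hσ₀⟩ := exists_forall_apply_ne hprod hρ not_isRoot_map_intP_three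
  refine threeRigid_stabilizer_blocks.eq_of_fixesAndMoves hle ⟨res σ₀, rfl⟩ hσ₀ fun d hd => ?_
  obtain ⟨σ, hσ⟩ : ∃ σ, FixesAndMoves (ρ (res σ)) d := by
    simp only [List.mem_cons, List.not_mem_nil, or_false] at hd
    obtain rfl | rfl | rfl | rfl := hd
    · exact exists_fixesAndMoves hprod hρ hasRootlessFactor_31
    · exact exists_fixesAndMoves hprod hρ hasRootlessFactor_2
    · exact exists_fixesAndMoves hprod hρ hasRootlessFactor_3
    · exact exists_fixesAndMoves hprod hρ hasRootlessFactor_5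
  exact ⟨_, ⟨res σ, rfl⟩, hσ⟩

theorem exists_injective_range_eq_stabilizer_blocks :
    ∃ ρ : P.Gal →* Equiv.Perm (Fin 32), Function.Injective ρ ∧
      ρ.range = MulAction.stabilizer (Equiv.Perm (Fin 32)) blocks := by
  obtain ⟨L, _, _, _, hP, hR⟩ := exists_isGalois_splits_ringOfIntegers monic_intP monic_intResolvent
  obtain ⟨κ, _, _, φ, α, hα, hprod, hφα⟩ := exists_roots_residueRoot hP
  obtain ⟨ρ, res, hρ, hres, hρα⟩ := exists_injective_apply_root hα hprod
  refine ⟨ρ, hρ, range_eq_stabilizer_blocks hprod hρα ?_⟩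
  rintro _ ⟨g, rfl⟩
  obtain ⟨σ, rfl⟩ := hres g
  refine mem_stabilizer_blocks_of_apply_root (fun x => ?_) hφα hR
    (MulSemiringAction.toRingEquiv _ (𝓞 L) σ) (hρα σ)
  rw [hprod, isRoot_prod]
  exact ⟨x, Finset.mem_univ x, root_X_sub_C.2 rfl⟩

end GaloisGroup

theorem galoisGroup_P :
    Nonempty (P.Gal ≃*
      GL (Fin 2) (ZMod 31) ⧸ Subgroup.center (GL (Fin 2) (ZMod 31))) := by
  obtain ⟨ρ, hρ, hrange⟩ := exists_injective_range_eq_stabilizer_blocks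
  let e : P.Gal ≃* glPerm.range :=
    (MonoidHom.ofInjective hρ).trans (MulEquiv.subgroupCongr (hrange.trans range_glPerm_eq.symm))
  exact ⟨e.trans <| (QuotientGroup.quotientKerEquivRange glPerm).symm.trans <|
    QuotientGroup.quotientMulEquivOfEq ker_glPerm⟩
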